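/- Let l, k ∈ {0,1,2,...} ∪ {∞} with k ≤ l, let I ⊆ ℝ be an interval, let γ : I → ℂ be a locally injective function of class C^l on I, and let t0 be an interior point of I. Then the class of functions f ∈ C^k(γ) which are non one-sided holomorphically extendable at (t0, γ(t0)) — that is, for which there exists no pair of a Jordan domain Ω whose boundary contains the arc γ([t1, t2]) for some t1 < t0 < t2 in I, and of a continuous function F : Ω ∪ γ((t1, t2)) → ℂ which is holomorphic on Ω and satisfies F = f on γ((t1, t2)) — is a dense and Gδ subset of C^k(γ). -/

import Mathlib

open Set Metric

/-- `γ` is locally injective on `I`: every point of `I` has a relative neighborhood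
in `I` on which `γ` is injective. -/
def LocallyInjOn (γ : ℝ → ℂ) (I : Set ℝ) : Prop :=
  ∀ t ∈ I, ∃ ε > 0, Set.InjOn γ (I ∩ Ioo (t - ε) (t + ε))

/-- The space `C^k(γ)` of functions `f : γ(I) → ℂ` (represented by functions
`f : ℂ → ℂ`) such that `f ∘ γ` is `k` times continuously differentiable on `I`. -/
def CkGamma (k : ℕ∞) (I : Set ℝ) (γ : ℝ → ℂ) : Type :=
  {f : ℂ → ℂ // ContDiffOn ℝ k (fun t => f (γ t)) I}

/-- The topology of `C^k(γ)`: the topology of uniform convergence on compact subsets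
of `I` of all derivatives `(f ∘ γ)⁽ʲ⁾`, `j ≤ k`. -/
noncomputable def ckTop (k : ℕ∞) (I : Set ℝ) (γ : ℝ → ℂ) :
    TopologicalSpace (CkGamma k I γ) :=
  TopologicalSpace.induced
    (fun f => fun j : ℕ =>
      UniformOnFun.ofFun {K : Set ↥I | IsCompact K}
        (fun t : ↥I => if (j : ℕ∞) ≤ k then
            iteratedDerivWithin j (fun s => f.1 (γ s)) I (t : ℝ) else 0))
    inferInstance

/-- A Jordan domain: a bounded connected open subset of `ℂ` whose boundary is the
image of a continuous injective map of the unit circle into `ℂ`. -/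
def IsJordanDomain (Ω : Set ℂ) : Prop :=
  IsOpen Ω ∧ IsConnected Ω ∧ Bornology.IsBounded Ω ∧
  ∃ φ : ℂ → ℂ, ContinuousOn φ (sphere (0 : ℂ) 1) ∧ Set.InjOn φ (sphere (0 : ℂ) 1) ∧
    frontier Ω = φ '' sphere (0 : ℂ) 1

/-- `f : γ(I) → ℂ` is one-sided holomorphically extendable at `(t0, γ(t0))`: there
are a Jordan domain `Ω` whose boundary contains the arc `γ([t1, t2])` for some
`t1 < t0 < t2` in `I`, and a continuous function `F` on `Ω ∪ γ((t1, t2))`,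
holomorphic on `Ω`, with `F = f` on `γ((t1, t2))`. -/
def OneSidedHolExtAt (I : Set ℝ) (γ : ℝ → ℂ) (f : ℂ → ℂ) (t0 : ℝ) : Prop :=
  ∃ Ω : Set ℂ, IsJordanDomain Ω ∧
    ∃ t1 ∈ I, ∃ t2 ∈ I, t1 < t0 ∧ t0 < t2 ∧
      γ '' Icc t1 t2 ⊆ frontier Ω ∧
      ∃ F : ℂ → ℂ, ContinuousOn F (Ω ∪ γ '' Ioo t1 t2) ∧
        DifferentiableOn ℂ F Ω ∧
        ∀ t ∈ Ioo t1 t2, F (γ t) = f (γ t)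

/-!
Whether `f` extends holomorphically through a Jordan domain `Ω` only depends on `Ω` near the arc, so
`Ω` may be shrunk: a crosscut of `Ω` joining two points of the arc cuts off a smaller Jordan domain
`W`, on whose closure the extension is bounded. Crosscuts whose two ends are segments from points of
a countable dense set to nearest points of the arc live in the separable space `ℝ × ℝ × C(ℝ, ℂ)`, so
countably many domains `W` suffice for all `Ω`. The part of the Jordan curve theorem needed here,
that certain curves `J` have bounded complementary components, comes from the nonexistence of a
continuous logarithm of `z - q` on `J`.

Hence the extendable functions are the union over countably many `W` and over `M : ℕ` of the
functions having an extension to `W` bounded by `M`. The maximum principle for `G z / (z - c) ^ n`,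
with `c` close to the arc but outside `W` and `n` large, shows that a bounded holomorphic `G` that
is small on the arc is small in `W` near the arc, hence near every point of `W`. So these sets are
closed, and an extension to `W` vanishing on a subarc vanishes. For density, take a smooth `φ` that
vanishes on a subarc of every arc starting at `γ t₀` but not on the whole of it: for each `W` at
most one of the functions `f + x φ`, `x ∈ ℝ`, has a bounded extension to `W`, so `f + x φ` is
non-extendable for all but countably many `x`.
-/

section ContinuousLogarithms

lemma continuousOn_extend_image {X Y Z : Type*} [TopologicalSpace X] [TopologicalSpace Y]
    [TopologicalSpace Z] {e : Y → X} (he : Topology.IsEmbedding e) {f : Y → Z} {A : Set Y}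
    (hf : ContinuousOn f A) (f₀ : X → Z) : ContinuousOn (Function.extend e f f₀) (e '' A) := by
  rintro _ ⟨y, hy, rfl⟩
  rw [ContinuousWithinAt, ← he.map_nhdsWithin_eq, Filter.tendsto_map'_iff,
    Function.extend_comp he.injective, he.injective.extend_apply]
  exact hf y hy

variable {X : Type*} [TopologicalSpace X] {g h : X → ℂ} {S T : Set X}

/-- `g` has a continuous logarithm on `S`; in particular it does not vanish there. -/
def HasContinuousLogOn (g : X → ℂ) (S : Set X) : Prop :=
  ∃ L : X → ℂ, ContinuousOn L S ∧ ∀ x ∈ S, Complex.exp (L x) = g x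

namespace HasContinuousLogOn

lemma ne_zero (hg : HasContinuousLogOn g S) {x : X} (hx : x ∈ S) : g x ≠ 0 := by
  obtain ⟨L, -, hLg⟩ := hg
  exact hLg x hx ▸ Complex.exp_ne_zero _

lemma mono (hg : HasContinuousLogOn g T) (hST : S ⊆ T) : HasContinuousLogOn g S :=
  let ⟨L, hL, hLg⟩ := hg
  ⟨L, hL.mono hST, fun x hx => hLg x (hST hx)⟩

lemma congr (hg : HasContinuousLogOn g S) (hgh : EqOn g h S) : HasContinuousLogOn h S :=
  let ⟨L, hL, hLg⟩ := hg
  ⟨L, hL, fun x hx => (hLg x hx).trans (hgh hx)⟩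

lemma const {c : ℂ} (hc : c ≠ 0) : HasContinuousLogOn (fun _ : X => c) S :=
  ⟨fun _ => Complex.log c, continuousOn_const, fun _ _ => Complex.exp_log hc⟩

lemma of_mem_slitPlane (hg : ContinuousOn g S) (hslit : ∀ x ∈ S, g x ∈ Complex.slitPlane) :
    HasContinuousLogOn g S :=
  ⟨fun x => Complex.log (g x), hg.clog hslit,
    fun x hx => Complex.exp_log (Complex.slitPlane_ne_zero (hslit x hx))⟩

lemma mul (hg : HasContinuousLogOn g S) (hh : HasContinuousLogOn h S) :
    HasContinuousLogOn (fun x => g x * h x) S :=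
  let ⟨L, hL, hLg⟩ := hg
  let ⟨M, hM, hMh⟩ := hh
  ⟨fun x => L x + M x, hL.add hM, fun x hx => by rw [Complex.exp_add, hLg x hx, hMh x hx]⟩

lemma div (hg : HasContinuousLogOn g S) (hh : HasContinuousLogOn h S) :
    HasContinuousLogOn (fun x => g x / h x) S :=
  let ⟨L, hL, hLg⟩ := hg
  let ⟨M, hM, hMh⟩ := hh
  ⟨fun x => L x - M x, hL.sub hM, fun x hx => by rw [Complex.exp_sub, hLg x hx, hMh x hx]⟩

lemma comp {Y : Type*} [TopologicalSpace Y] {u : Y → X} {A : Set Y}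
    (hg : HasContinuousLogOn g S) (hu : ContinuousOn u A) (hAS : MapsTo u A S) :
    HasContinuousLogOn (g ∘ u) A :=
  let ⟨L, hL, hLg⟩ := hg
  ⟨L ∘ u, hL.comp hu hAS, fun x hx => hLg (u x) (hAS hx)⟩

lemma image_of_isEmbedding {Y : Type*} [TopologicalSpace Y] {e : Y → X}
    (he : Topology.IsEmbedding e) {A : Set Y} (hg : HasContinuousLogOn (g ∘ e) A) :
    HasContinuousLogOn g (e '' A) := by
  obtain ⟨L, hL, hLg⟩ := hg
  refine ⟨Function.extend e L 0, continuousOn_extend_image he hL 0, ?_⟩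
  rintro _ ⟨y, hy, rfl⟩
  exact (congrArg Complex.exp (he.injective.extend_apply L 0 y)).trans (hLg y hy)

lemma univ_of_simplyConnectedSpace [SimplyConnectedSpace X] [LocallyPathConnectedSpace X]
    (hg : Continuous g) (hg0 : ∀ x, g x ≠ 0) : HasContinuousLogOn g univ := by
  obtain ⟨L, ⟨-, hL⟩, -⟩ := Complex.isCoveringMapOn_exp.existsUnique_continuousMap_lifts
    (⟨g, hg⟩ : C(X, ℂ)) (a₀ := Classical.arbitrary X) (Complex.exp_log (hg0 _)) (fun x => hg0 x)
  exact ⟨L, L.continuous.continuousOn, fun x _ => congrFun hL x⟩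

end HasContinuousLogOn

lemma sub_eq_sub_of_exp_eq_exp (hS : IsPreconnected S) {L M : X → ℂ} (hL : ContinuousOn L S)
    (hM : ContinuousOn M S) (hLM : ∀ x ∈ S, Complex.exp (L x) = Complex.exp (M x)) {x y : X}
    (hx : x ∈ S) (hy : y ∈ S) : L x - M x = L y - M y := by
  refine Complex.isCoveringMap_exp.constOn_of_comp hS (hL.sub hM) (fun a ha b hb => ?_) hx hy
  have hone : ∀ w ∈ S, Complex.exp (L w - M w) = 1 := fun w hw => by
    rw [Complex.exp_sub, hLM w hw, div_self (Complex.exp_ne_zero _)]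
  exact Subtype.ext ((hone a ha).trans (hone b hb).symm)

lemma not_hasContinuousLogOn_union_of_slitPlane {r : X → ℂ} (hS : IsPreconnected S)
    (hT : IsPreconnected T) (hrS : ContinuousOn r S) (hrT : ContinuousOn r T)
    (hslitS : ∀ x ∈ S, r x ∈ Complex.slitPlane) (hslitT : ∀ x ∈ T, -r x ∈ Complex.slitPlane)
    {x y : X} (hx : x ∈ S ∩ T) (hy : y ∈ S ∩ T) (hneg : (r x).im < 0) (hpos : 0 < (r y).im) :
    ¬ HasContinuousLogOn r (S ∪ T) := by
  rintro ⟨L, hL, hLr⟩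
  have hconstS := sub_eq_sub_of_exp_eq_exp hS (hL.mono subset_union_left) (hrS.clog hslitS)
    (fun w hw => by
      rw [hLr w (.inl hw), Complex.exp_log (Complex.slitPlane_ne_zero (hslitS w hw))])
    hx.1 hy.1
  have hconstT := sub_eq_sub_of_exp_eq_exp (M := fun w => Complex.log (-r w) + Real.pi * Complex.I)
    hT (hL.mono subset_union_right) ((hrT.neg.clog hslitT).add continuousOn_const)
    (fun w hw => by
      rw [hLr w (.inr hw), Complex.exp_add, Complex.exp_pi_mul_I,
        Complex.exp_log (Complex.slitPlane_ne_zero (hslitT w hw))]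
      ring)
    hx.2 hy.2
  have himS := congrArg Complex.im hconstS
  have himT := congrArg Complex.im hconstT
  simp only [Complex.sub_im, Complex.add_im, Complex.log_im,
    Complex.arg_neg_eq_arg_add_pi_of_im_neg hneg,
    Complex.arg_neg_eq_arg_sub_pi_of_im_pos hpos] at himS himT
  linarith [Real.pi_pos]

end ContinuousLogarithms

section LogarithmsInThePlane

lemma div_sub_mem_slitPlane {w p q : ℂ} (h : dist p q < dist w q) :
    (w - p) / (w - q) ∈ Complex.slitPlane := by
  have hwq : w - q ≠ 0 := sub_ne_zero.2 (dist_pos.1 (dist_nonneg.trans_lt h))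
  have hsplit : (w - p) / (w - q) = 1 + -(p - q) / (w - q) := by
    field_simp
    ring
  rw [hsplit]
  refine Complex.mem_slitPlane_of_norm_lt_one ?_
  rwa [norm_div, norm_neg, div_lt_one (norm_pos_iff.2 hwq), ← dist_eq_norm, ← dist_eq_norm]

variable {J : Set ℂ} {p q : ℂ}

lemma HasContinuousLogOn.sub_of_dist_lt (hq : HasContinuousLogOn (· - q) J)
    (hpq : ∀ w ∈ J, dist p q < dist w q) : HasContinuousLogOn (· - p) J := by
  have hne : ∀ w ∈ J, w - q ≠ 0 := fun w hw => hq.ne_zero hw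
  have hratio : HasContinuousLogOn (fun w => (w - p) / (w - q)) J :=
    .of_mem_slitPlane (.div (by fun_prop) (by fun_prop) hne)
      fun w hw => div_sub_mem_slitPlane (hpq w hw)
  exact (hq.mul hratio).congr fun w hw => mul_div_cancel₀ _ (hne w hw)

lemma hasContinuousLogOn_sub_of_norm_lt (hp : ∀ w ∈ J, ‖w‖ < ‖p‖) :
    HasContinuousLogOn (· - p) J := by
  rcases J.eq_empty_or_nonempty with rfl | ⟨w₀, hw₀⟩
  · exact ⟨0, continuousOn_const, fun w hw => hw.elim⟩
  have hp0 : p ≠ 0 := norm_pos_iff.1 ((norm_nonneg _).trans_lt (hp w₀ hw₀))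
  have hslit : ∀ w ∈ J, 1 + -w / p ∈ Complex.slitPlane := fun w hw => by
    refine Complex.mem_slitPlane_of_norm_lt_one ?_
    rw [norm_div, norm_neg, div_lt_one (norm_pos_iff.2 hp0)]
    exact hp w hw
  refine ((HasContinuousLogOn.const (neg_ne_zero.2 hp0)).mul
    (.of_mem_slitPlane (by fun_prop) hslit)).congr fun w _ => ?_
  field_simp
  ring

lemma not_hasContinuousLogOn_sphere (q : ℂ) {R : ℝ} (hR : 0 < R) :
    ¬ HasContinuousLogOn (· - q) (sphere q R) := by
  rintro ⟨L, hL, hLe⟩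
  let c : ℝ → ℂ := circleMap q R
  have hc : ∀ θ, c θ ∈ sphere q R := circleMap_mem_sphere q hR.le
  have hconst := sub_eq_sub_of_exp_eq_exp isPreconnected_univ (L := L ∘ c)
    (M := fun θ : ℝ => Complex.log R + θ * Complex.I)
    (hL.comp_continuous (continuous_circleMap q R) hc).continuousOn (by fun_prop)
    (fun θ _ => by
      rw [Function.comp_apply, hLe _ (hc θ), Complex.exp_add,
        Complex.exp_log (Complex.ofReal_ne_zero.2 hR.ne')]
      simp [c, circleMap])
    (mem_univ (0 : ℝ)) (mem_univ (2 * Real.pi))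
  have hperiod : c (2 * Real.pi) = c 0 := by simpa using periodic_circleMap q R 0
  simp [hperiod, Real.pi_ne_zero] at hconst

lemma not_hasContinuousLogOn_frontier {U : Set ℂ} (hb : Bornology.IsBounded U) (hq : q ∈ U) :
    ¬ HasContinuousLogOn (· - q) (frontier U) := by
  classical
  rintro ⟨L, hL, hLe⟩
  obtain ⟨T, hT⟩ := ContinuousMap.exists_restrict_eq (isClosed_frontier (s := U))
    ⟨_, continuousOn_iff_continuous_domRestrict.1 hL⟩
  have hTL : ∀ w ∈ frontier U, T w = L w := fun w hw => DFunLike.congr_fun hT ⟨w, hw⟩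
  let g : ℂ → ℂ := fun w => if w ∈ U then Complex.exp (T w) else w - q
  have hg : Continuous g := by
    refine continuous_if (fun w hw => ?_) (by fun_prop) (by fun_prop)
    rw [hTL w hw, hLe w hw]
  have hg0 : ∀ w, g w ≠ 0 := fun w => by
    simp only [g]
    split_ifs with hw
    · exact Complex.exp_ne_zero _
    · exact sub_ne_zero.2 fun h => hw (h ▸ hq)
  obtain ⟨R, hR, hUR⟩ := hb.subset_ball_lt 0 q
  refine not_hasContinuousLogOn_sphere q hR (((HasContinuousLogOn.univ_of_simplyConnectedSpace
    hg hg0).mono (subset_univ _)).congr fun w hw => if_neg fun hwU => ?_)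
  exact (mem_ball.1 (hUR hwU)).ne hw

lemma hasContinuousLogOn_sub_iff_of_dist_lt (hpq : dist p q < infDist q J / 2) :
    HasContinuousLogOn (· - p) J ↔ HasContinuousLogOn (· - q) J := by
  have hq : ∀ w ∈ J, 2 * dist p q < dist w q := fun w hw => by
    linarith [dist_comm w q ▸ infDist_le_dist_of_mem (x := q) hw]
  refine ⟨fun h => h.sub_of_dist_lt fun w hw => ?_, fun h => h.sub_of_dist_lt fun w hw => ?_⟩
  · linarith [hq w hw, dist_triangle w p q, dist_comm p q]
  · linarith [hq w hw, dist_nonneg (x := p) (y := q)]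

lemma isBounded_connectedComponentIn_of_not_hasContinuousLogOn (hJ : IsCompact J) (hq : q ∉ J)
    (hlog : ¬ HasContinuousLogOn (· - q) J) :
    Bornology.IsBounded (connectedComponentIn Jᶜ q) := by
  have hJne : J.Nonempty := by
    by_contra hempty
    exact hlog ⟨0, continuousOn_const, fun w hw => (hempty ⟨w, hw⟩).elim⟩
  have hnolog : ∀ p ∈ connectedComponentIn Jᶜ q, ¬ HasContinuousLogOn (· - p) J := fun p hp => by
    refine (isPreconnected_connectedComponentIn.induction₂
      (fun x y => HasContinuousLogOn (· - y) J ↔ HasContinuousLogOn (· - x) J)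
      (fun x hx => ?_) (fun _ _ _ _ _ _ hxy hyz => hyz.trans hxy) (fun _ _ _ _ => Iff.symm)
      (mem_connectedComponentIn hq) hp).not.2 hlog
    have hxJ : 0 < infDist x J / 2 :=
      half_pos ((hJ.isClosed.notMem_iff_infDist_pos hJne).1 (connectedComponentIn_subset _ _ hx))
    filter_upwards [mem_nhdsWithin_of_mem_nhds (ball_mem_nhds x hxJ)] with y hy
    exact hasContinuousLogOn_sub_iff_of_dist_lt (mem_ball.1 hy)
  obtain ⟨R, hR⟩ := hJ.isBounded.subset_ball 0
  refine isBounded_ball.subset (t := ball 0 R) fun p hp => ?_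
  by_contra hpR
  refine hnolog p hp (hasContinuousLogOn_sub_of_norm_lt fun w hw => ?_)
  exact (mem_ball_zero_iff.1 (hR hw)).trans_le (not_lt.1 (mt mem_ball_zero_iff.2 hpR))

lemma frontier_connectedComponentIn_compl_subset {E : Type*} [TopologicalSpace E]
    [LocallyConnectedSpace E] {K : Set E} (hK : IsClosed K) (x : E) :
    frontier (connectedComponentIn Kᶜ x) ⊆ K := by
  intro y hy
  by_contra hyK
  have hopen : ∀ z, IsOpen (connectedComponentIn Kᶜ z) := fun _ =>
    hK.isOpen_compl.connectedComponentIn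
  rw [(hopen x).frontier_eq] at hy
  obtain ⟨z, hzy, hzx⟩ := mem_closure_iff.1 hy.1 _ (hopen y) (mem_connectedComponentIn hyK)
  refine hy.2 ?_
  rw [connectedComponentIn_eq hzx, ← connectedComponentIn_eq hzy]
  exact mem_connectedComponentIn hyK

section CayleyTransform

variable {η : ℝ} (x : ℝ)

lemma sub_mul_I_div_sub_neg_mul_I_re :
    ((x - η * Complex.I) / (x - (-η : ℝ) * Complex.I) : ℂ).re =
      (x * x - η * η) / (x * x + η * η) := by
  simp only [Complex.ofReal_neg, neg_mul, sub_neg_eq_add, Complex.div_re, Complex.sub_re,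
    Complex.add_re, Complex.sub_im, Complex.add_im, Complex.mul_re, Complex.mul_im,
    Complex.ofReal_re, Complex.ofReal_im, Complex.I_re, Complex.I_im, Complex.normSq_apply]
  ring

lemma sub_mul_I_div_sub_neg_mul_I_im :
    ((x - η * Complex.I) / (x - (-η : ℝ) * Complex.I) : ℂ).im =
      -(2 * η * x) / (x * x + η * η) := by
  simp only [Complex.ofReal_neg, neg_mul, sub_neg_eq_add, Complex.div_im, Complex.sub_re,
    Complex.add_re, Complex.sub_im, Complex.add_im, Complex.mul_re, Complex.mul_im,
    Complex.ofReal_re, Complex.ofReal_im, Complex.I_re, Complex.I_im, Complex.normSq_apply]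
  ring

lemma neg_sub_mul_I_div_sub_neg_mul_I_mem_slitPlane (hη : η ≠ 0) :
    -((x - η * Complex.I) / (x - (-η : ℝ) * Complex.I) : ℂ) ∈ Complex.slitPlane := by
  rw [Complex.mem_slitPlane_iff, Complex.neg_re, Complex.neg_im, neg_ne_zero,
    sub_mul_I_div_sub_neg_mul_I_re, sub_mul_I_div_sub_neg_mul_I_im]
  rcases eq_or_ne x 0 with rfl | hx
  · left
    simp [hη]
  · right
    have hdenom : 0 < x * x + η * η := by nlinarith [sq_nonneg x, sq_pos_of_ne_zero hη]
    simp [hη, hx, hdenom.ne']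

end CayleyTransform

section IntervalAndContinuum

variable {K : Set ℂ}

lemma mul_I_notMem_Icc_union {η e : ℝ} (hη : 0 < η) (hfar : ∀ w ∈ K, 4 * η ≤ ‖w‖) (he : |e| = η) :
    (e * Complex.I : ℂ) ∉ (↑) '' Icc (-1 : ℝ) 1 ∪ K := by
  rintro (⟨x, -, hx⟩ | hmem)
  · have him : e = 0 := by simpa using (congrArg Complex.im hx).symm
    exact hη.ne (by rw [← he, him, abs_zero])
  · have hnorm : ‖(e * Complex.I : ℂ)‖ = η := by simpa using he
    linarith [hfar _ hmem]

lemma exists_not_hasContinuousLogOn_Icc_union (hK : IsPreconnected K) (hKc : IsClosed K)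
    (h0 : (0 : ℂ) ∉ K) (hneg : (-1 : ℂ) ∈ K) (hone : (1 : ℂ) ∈ K) :
    ∃ z ∉ (↑) '' Icc (-1 : ℝ) 1 ∪ K,
      ¬ HasContinuousLogOn (· - z) ((↑) '' Icc (-1 : ℝ) 1 ∪ K) := by
  obtain ⟨η, hη, hfar⟩ : ∃ η : ℝ, 0 < η ∧ ∀ w ∈ K, 4 * η ≤ ‖w‖ := by
    have hdist := (hKc.notMem_iff_infDist_pos ⟨_, hone⟩).1 h0
    refine ⟨infDist 0 K / 4, by positivity, fun w hw => ?_⟩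
    linarith [dist_zero_left w ▸ infDist_le_dist_of_mem (x := 0) hw]
  by_contra! hlog
  have hlogp := hlog _ (mul_I_notMem_Icc_union hη hfar (abs_of_pos hη))
  have hlogq := hlog _ (mul_I_notMem_Icc_union hη hfar ((abs_neg η).trans (abs_of_pos hη)))
  let r : ℂ → ℂ := fun w => (w - η * Complex.I) / (w - (-η : ℝ) * Complex.I)
  have hrc : ContinuousOn r ((↑) '' Icc (-1 : ℝ) 1 ∪ K) :=
    .div (by fun_prop) (by fun_prop) fun w hw => hlogq.ne_zero hw
  have hslitK : ∀ w ∈ K, r w ∈ Complex.slitPlane := fun w hw => by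
    refine div_sub_mem_slitPlane ?_
    have hp : ‖(η * Complex.I : ℂ)‖ = η := by simp [abs_of_pos hη]
    have hq : ‖((-η : ℝ) * Complex.I : ℂ)‖ = η := by simp [abs_of_pos hη]
    rw [dist_eq_norm, dist_eq_norm]
    linarith [norm_sub_norm_le w ((-η : ℝ) * Complex.I), hfar w hw,
      norm_sub_le (η * Complex.I : ℂ) ((-η : ℝ) * Complex.I)]
  have hslitIcc : ∀ w ∈ ((↑) : ℝ → ℂ) '' Icc (-1 : ℝ) 1, -r w ∈ Complex.slitPlane := by
    rintro _ ⟨x, -, rfl⟩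
    exact neg_sub_mul_I_div_sub_neg_mul_I_mem_slitPlane x hη.ne'
  have hone' : ((1 : ℝ) : ℂ) ∈ (↑) '' Icc (-1 : ℝ) 1 := mem_image_of_mem _ (by simp)
  have hneg' : ((-1 : ℝ) : ℂ) ∈ (↑) '' Icc (-1 : ℝ) 1 := mem_image_of_mem _ (by simp)
  refine not_hasContinuousLogOn_union_of_slitPlane hK
    (isPreconnected_Icc.image _ Complex.continuous_ofReal.continuousOn)
    (hrc.mono subset_union_right) (hrc.mono subset_union_left) hslitK hslitIcc
    (x := (1 : ℝ)) (y := (-1 : ℝ)) ⟨by simpa using hone, hone'⟩ ⟨by simpa using hneg, hneg'⟩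
    ?_ ?_ (union_comm _ _ ▸ hlogp.div hlogq)
  · rw [sub_mul_I_div_sub_neg_mul_I_im, div_neg_iff]
    exact .inr ⟨by linarith, by nlinarith⟩
  · rw [sub_mul_I_div_sub_neg_mul_I_im]
    exact div_pos (by linarith) (by nlinarith)

lemma exists_not_hasContinuousLogOn_segment_union {p q : ℂ} (hpq : p ≠ q) (hK : IsPreconnected K)
    (hKc : IsClosed K) (hmid : midpoint ℝ p q ∉ K) (hp : p ∈ K) (hq : q ∈ K) :
    ∃ z ∉ segment ℝ p q ∪ K, ¬ HasContinuousLogOn (· - z) (segment ℝ p q ∪ K) := by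
  have hd : (q - p) / 2 ≠ 0 := div_ne_zero (sub_ne_zero.2 hpq.symm) two_ne_zero
  let u : ℂ ≃ₜ ℂ := affineHomeomorph ((q - p) / 2) (midpoint ℝ p q) hd
  have hu : ∀ w, u w = (q - p) / 2 * w + (p + q) / 2 := fun w => by
    rw [affineHomeomorph_apply, midpoint_eq_smul_add, Complex.real_smul, invOf_eq_inv]
    push_cast
    ring
  have hneg : u (-1) = p := by rw [hu]; ring
  have hone : u 1 = q := by rw [hu]; ring
  have hsegment : u '' ((↑) '' Icc (-1 : ℝ) 1) = segment ℝ p q := by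
    have hline : ∀ x : ℝ, AffineMap.lineMap (u 0) q x = u x := fun x => by
      rw [AffineMap.lineMap_apply, hu, hu]
      simp only [vsub_eq_sub, vadd_eq_add, Complex.real_smul]
      ring
    rw [image_image, ← segment_eq_Icc (by norm_num : (-1 : ℝ) ≤ 1)]
    simp_rw [← hline]
    rw [image_segment, hline, hline]
    push_cast
    rw [hneg, hone]
  obtain ⟨z, hz, hlog⟩ := exists_not_hasContinuousLogOn_Icc_union
    (u.isPreconnected_preimage.2 hK) (hKc.preimage u.continuous)
    (by simpa [u] using hmid) (by rwa [mem_preimage, hneg]) (by rwa [mem_preimage, hone])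
  have himage : u '' ((↑) '' Icc (-1 : ℝ) 1 ∪ u ⁻¹' K) = segment ℝ p q ∪ K := by
    rw [image_union, hsegment, image_preimage_eq _ u.surjective]
  rw [← himage]
  refine ⟨u z, u.injective.mem_set_image.not.2 hz, fun h => hlog ?_⟩
  refine (((h.comp u.continuous.continuousOn (mapsTo_image _ _)).div (.const hd))).congr
    fun w _ => ?_
  simp only [Function.comp_apply, hu]
  rw [div_eq_iff hd]
  ring

end IntervalAndContinuum

end LogarithmsInThePlane

section JordanCurves

lemma HasContinuousLogOn.compl_singleton_circle {g : Circle → ℂ} (hg : Continuous g)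
    (hg0 : ∀ z, g z ≠ 0) (z₀ : Circle) : HasContinuousLogOn g {z₀}ᶜ := by
  let z₁ : Circle := z₀ / Circle.exp Real.pi
  obtain ⟨L, hL, hLg⟩ := HasContinuousLogOn.univ_of_simplyConnectedSpace
    (g := fun θ : ℝ => g (z₁ * Circle.exp θ)) (by fun_prop) (fun θ => hg0 _)
  have hexp : ∀ z : Circle, z₁ * Circle.exp (Complex.arg (z / z₁ : Circle)) = z := fun z => by
    rw [Circle.exp_arg, mul_div_cancel]
  have harg : ∀ z : Circle, z ≠ z₀ → ((z / z₁ : Circle) : ℂ) ∈ Complex.slitPlane := fun z hz => by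
    refine Complex.mem_slitPlane_iff_arg.2 ⟨fun hpi => hz ?_, Circle.coe_ne_zero _⟩
    rw [← hexp z, hpi, div_mul_cancel]
  refine ⟨fun z => L (Complex.arg (z / z₁ : Circle)),
    (continuousOn_univ.1 hL).comp_continuousOn fun z hz => ?_, fun z _ => ?_⟩
  · exact (Complex.continuousAt_arg (harg z hz)).comp_continuousWithinAt
      (f := fun w : Circle => ((w / z₁ : Circle) : ℂ)) (by fun_prop)
  · exact (hLg _ trivial).trans (congrArg g (hexp z))

/-- A Jordan curve in the plane: the image of a continuous injective map of the circle. -/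
def IsJordanCurve (J : Set ℂ) : Prop :=
  ∃ e : Circle → ℂ, Continuous e ∧ Function.Injective e ∧ range e = J

lemma isJordanDomain_iff {Ω : Set ℂ} :
    IsJordanDomain Ω ↔
      IsOpen Ω ∧ IsConnected Ω ∧ Bornology.IsBounded Ω ∧ IsJordanCurve (frontier Ω) := by
  let ι : Circle → ℂ := fun z => z
  have hι : Topology.IsEmbedding ι := Topology.IsEmbedding.subtypeVal
  have hrange : range ι = sphere 0 1 := Subtype.range_val
  refine and_congr_right' (and_congr_right' (and_congr_right' ⟨?_, ?_⟩))
  · rintro ⟨φ, hφ, hinj, hfr⟩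
    rw [← hrange] at hφ hinj hfr
    exact ⟨φ ∘ ι, hφ.comp_continuous hι.continuous mem_range_self,
      fun z w h => hι.injective (hinj (mem_range_self z) (mem_range_self w) h),
      (range_comp φ ι).trans hfr.symm⟩
  · rintro ⟨e, he, hinj, hfr⟩
    have hext : ∀ z, Function.extend ι e 0 (ι z) = e z := hι.injective.extend_apply e 0
    refine ⟨Function.extend ι e 0, ?_, ?_, ?_⟩ <;> rw [← hrange]
    · rw [← image_univ]
      exact continuousOn_extend_image hι he.continuousOn 0
    · rintro _ ⟨z, rfl⟩ _ ⟨w, rfl⟩ h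
      rw [hext, hext] at h
      rw [hinj h]
    · rw [← hfr, ← range_comp, Function.extend_comp hι.injective]

namespace IsJordanCurve

variable {J : Set ℂ}

lemma frontier_eq_of_subset (hJ : IsJordanCurve J) {U : Set ℂ} (hb : Bornology.IsBounded U)
    (hUJ : frontier U ⊆ J) (hne : (U \ J).Nonempty) : frontier U = J := by
  obtain ⟨e, he, hinj, rfl⟩ := hJ
  obtain ⟨q, hqU, hqJ⟩ := hne
  refine hUJ.antisymm ?_
  rintro _ ⟨z₀, rfl⟩
  by_contra hz₀
  refine not_hasContinuousLogOn_frontier hb hqU (HasContinuousLogOn.mono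
    (HasContinuousLogOn.image_of_isEmbedding (he.isClosedEmbedding hinj).isEmbedding
      (HasContinuousLogOn.compl_singleton_circle (g := (· - q) ∘ e) (by fun_prop)
        (fun z => sub_ne_zero.2 fun h => hqJ ⟨z, h⟩) z₀)) fun w hw => ?_)
  obtain ⟨z, rfl⟩ := hUJ hw
  exact ⟨z, fun h => hz₀ (mem_singleton_iff.1 h ▸ hw), rfl⟩

end IsJordanCurve

section LocalArcs

variable {u v m : ℝ}

lemma image_Ioo_mem_nhds_of_injOn {f : ℝ → ℝ} (hf : ContinuousOn f (Icc u v))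
    (hinj : InjOn f (Icc u v)) (hm : m ∈ Ioo u v) : f '' Ioo u v ∈ nhds (f m) := by
  have huv := hm.1.trans hm.2
  have hu : u ∈ Icc u v := left_mem_Icc.2 huv.le
  have hv : v ∈ Icc u v := right_mem_Icc.2 huv.le
  have hm' : m ∈ Icc u v := Ioo_subset_Icc_self hm
  rcases hf.strictMonoOn_of_injOn_Icc' huv.le hinj with hmono | hanti
  · exact Filter.mem_of_superset (Ioo_mem_nhds (hmono hu hm' hm.1) (hmono hm' hv hm.2))
      (intermediate_value_Ioo huv.le hf)
  · exact Filter.mem_of_superset (Ioo_mem_nhds (hanti hm' hv hm.2) (hanti hu hm' hm.1))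
      (intermediate_value_Ioo' huv.le hf)

lemma circle_image_Ioo_mem_nhds_of_injOn {σ : ℝ → Circle} (hσ : Continuous σ)
    (hinj : InjOn σ (Icc u v)) (hm : m ∈ Ioo u v) : σ '' Ioo u v ∈ nhds (σ m) := by
  obtain ⟨x, hx⟩ := Circle.exp_surjective (σ 0)
  obtain ⟨f, ⟨-, hf⟩, -⟩ :=
    Circle.isCoveringMap_exp.existsUnique_continuousMap_lifts ⟨σ, hσ⟩ 0 x hx
  have hfσ : ∀ t, Circle.exp (f t) = σ t := congrFun hf
  have himage := isLocalHomeomorph_circleExp.isOpenMap.image_mem_nhds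
    (image_Ioo_mem_nhds_of_injOn f.continuous.continuousOn
      (fun s hs t ht h => hinj hs ht (by rw [← hfσ, ← hfσ, h])) hm)
  simpa only [image_image, hfσ] using himage

lemma IsJordanCurve.image_Ioo_mem_nhdsWithin {J : Set ℂ} (hJ : IsJordanCurve J) {γ : ℝ → ℂ}
    (hγ : ContinuousOn γ (Icc u v)) (hinj : InjOn γ (Icc u v)) (hγJ : MapsTo γ (Icc u v) J)
    (hm : m ∈ Ioo u v) : γ '' Ioo u v ∈ nhdsWithin (γ m) J := by
  obtain ⟨e, he, heinj, rfl⟩ := hJ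
  have hembed := (he.isClosedEmbedding heinj).isEmbedding
  have huv : u ≤ v := (hm.1.trans hm.2).le
  let σ : ℝ → Circle := fun t =>
    hembed.toHomeomorph.symm ⟨γ (projIcc u v huv t), hγJ (projIcc u v huv t).2⟩
  have hσ : Continuous σ := hembed.toHomeomorph.symm.continuous.comp
    ((hγ.comp_continuous (continuous_subtype_val.comp continuous_projIcc)
      fun t => (projIcc u v huv t).2).subtype_mk _)
  have hσγ : ∀ t ∈ Icc u v, e (σ t) = γ t := fun t ht => by
    have hval : e (σ t) = γ (projIcc u v huv t) :=
      congrArg Subtype.val (hembed.toHomeomorph.apply_symm_apply _)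
    rw [hval, projIcc_of_mem huv ht]
  have hσinj : InjOn σ (Icc u v) := fun s hs t ht h =>
    hinj hs ht (by rw [← hσγ s hs, ← hσγ t ht, h])
  have himage := Filter.image_mem_map (m := e) (circle_image_Ioo_mem_nhds_of_injOn hσ hσinj hm)
  rw [hembed.map_nhds_eq, hσγ m (Ioo_subset_Icc_self hm), image_image] at himage
  rwa [image_congr fun t ht => hσγ t (Ioo_subset_Icc_self ht)] at himage

end LocalArcs

section Loops

lemma isJordanCurve_of_loop {g : ℝ → ℂ} {T : ℝ} (hT : 0 < T) (hg : ContinuousOn g (Icc 0 T))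
    (hinj : InjOn g (Ico 0 T)) (hclosed : g 0 = g T) : IsJordanCurve (g '' Icc 0 T) := by
  have : Fact (0 < T) := ⟨hT⟩
  let G : AddCircle T → ℂ := AddCircle.liftIco T 0 g
  have hG : ∀ t ∈ Icc 0 T, G t = g t := fun t ht => by
    rcases ht.2.lt_or_eq with htT | rfl
    · exact AddCircle.liftIco_zero_coe_apply ⟨ht.1, htT⟩
    · rw [AddCircle.coe_period, ← AddCircle.coe_zero, ← hclosed]
      exact AddCircle.liftIco_zero_coe_apply ⟨le_rfl, hT⟩
  have hGinj : Function.Injective G := by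
    have hlift : ∀ x : AddCircle T, ∃ t ∈ Ico 0 T, (t : AddCircle T) = x := fun x => by
      simpa only [zero_add, mem_image] using (AddCircle.coe_image_Ico_eq T 0).ge (mem_univ x)
    intro x y hxy
    obtain ⟨s, hs, rfl⟩ := hlift x
    obtain ⟨t, ht, rfl⟩ := hlift y
    rw [hG s (Ico_subset_Icc_self hs), hG t (Ico_subset_Icc_self ht)] at hxy
    rw [hinj hs ht hxy]
  let h := AddCircle.homeomorphCircle hT.ne'
  refine ⟨G ∘ h.symm, (AddCircle.liftIco_zero_continuous hclosed hg).comp h.symm.continuous,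
    hGinj.comp h.symm.injective, ?_⟩
  rw [h.symm.surjective.range_comp, ← image_univ, ← AddCircle.coe_image_Icc_eq T 0, zero_add,
    image_image]
  exact image_congr hG

lemma isJordanCurve_union_of_arcs {α β : ℝ → ℂ} (hα : ContinuousOn α (Icc 0 1))
    (hαinj : InjOn α (Icc 0 1)) (hβ : ContinuousOn β (Icc 0 1)) (hβinj : InjOn β (Icc 0 1))
    (hzero : α 0 = β 0) (hone : α 1 = β 1) (hdisj : ∀ t ∈ Ioo (0 : ℝ) 1, β t ∉ α '' Icc 0 1) :
    IsJordanCurve (α '' Icc 0 1 ∪ β '' Icc 0 1) := by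
  let g : ℝ → ℂ := fun t => if t ≤ 1 then α t else β (2 - t)
  have hgα : ∀ t ∈ Icc (0 : ℝ) 1, g t = α t := fun t ht => if_pos ht.2
  have hgβ : ∀ t ∈ Icc (1 : ℝ) 2, g t = β (2 - t) := fun t ht => by
    rcases ht.1.eq_or_lt with rfl | h
    · rw [show (2 - 1 : ℝ) = 1 by norm_num, ← hone]
      exact if_pos le_rfl
    · exact if_neg h.not_ge
  have hrefl : (fun t : ℝ => 2 - t) '' Icc 1 2 = Icc 0 1 := by
    rw [image_const_sub_Icc]
    norm_num
  have hsplit : Icc (0 : ℝ) 2 = Icc 0 1 ∪ Icc 1 2 :=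
    (Icc_union_Icc_eq_Icc zero_le_one one_le_two).symm
  have himage : g '' Icc 0 2 = α '' Icc 0 1 ∪ β '' Icc 0 1 := by
    rw [hsplit, image_union, image_congr hgα, image_congr hgβ, ← image_image β, hrefl]
  have hcont : ContinuousOn g (Icc 0 2) := by
    rw [hsplit]
    refine (hα.congr hgα).union_of_isClosed ((ContinuousOn.comp hβ (by fun_prop)
      fun t ht => ?_).congr hgβ) isClosed_Icc isClosed_Icc
    exact hrefl ▸ mem_image_of_mem _ ht
  have hcross : ∀ s ∈ Icc (0 : ℝ) 1, ∀ t ∈ Ioo (1 : ℝ) 2, g s ≠ g t := fun s hs t ht h => by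
    refine hdisj (2 - t) ⟨by linarith [ht.2], by linarith [ht.1]⟩ ⟨s, hs, ?_⟩
    rw [← hgα s hs, h, hgβ t (Ioo_subset_Icc_self ht)]
  rw [← himage]
  refine isJordanCurve_of_loop two_pos hcont (fun s hs t ht h => ?_) ?_
  · rcases le_or_gt s 1 with hs1 | hs1 <;> rcases le_or_gt t 1 with ht1 | ht1
    · exact hαinj ⟨hs.1, hs1⟩ ⟨ht.1, ht1⟩ (by rwa [← hgα s ⟨hs.1, hs1⟩, ← hgα t ⟨ht.1, ht1⟩])
    · exact (hcross s ⟨hs.1, hs1⟩ t ⟨ht1, ht.2⟩ h).elim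
    · exact (hcross t ⟨ht.1, ht1⟩ s ⟨hs1, hs.2⟩ h.symm).elim
    · rw [hgβ s ⟨hs1.le, hs.2.le⟩, hgβ t ⟨ht1.le, ht.2.le⟩] at h
      linarith [hβinj ⟨by linarith [hs.2], by linarith⟩ ⟨by linarith [ht.2], by linarith⟩ h]
  · rw [hgα 0 (by simp), hgβ 2 (by simp), hzero, sub_self]

end Loops

end JordanCurves

section JordanDomains

lemma subset_of_disjoint_frontier {X : Type*} [TopologicalSpace X] {S U : Set X}
    (hS : IsPreconnected S) (hU : IsOpen U) (hSU : (S ∩ U).Nonempty)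
    (hfr : Disjoint S (frontier U)) : S ⊆ U := by
  refine hS.subset_left_of_subset_union hU isClosed_closure.isOpen_compl
    (disjoint_compl_right.mono_left subset_closure) (fun x hx => ?_) hSU
  by_cases hxU : x ∈ closure U
  · exact .inl (by_contra fun h => disjoint_left.1 hfr hx (hU.frontier_eq ▸ ⟨hxU, h⟩))
  · exact .inr hxU

namespace IsJordanDomain

variable {Ω : Set ℂ}

lemma isOpen (hΩ : IsJordanDomain Ω) : IsOpen Ω := hΩ.1

lemma isConnected (hΩ : IsJordanDomain Ω) : IsConnected Ω := hΩ.2.1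

lemma isBounded (hΩ : IsJordanDomain Ω) : Bornology.IsBounded Ω := hΩ.2.2.1

lemma isJordanCurve_frontier (hΩ : IsJordanDomain Ω) : IsJordanCurve (frontier Ω) :=
  (isJordanDomain_iff.1 hΩ).2.2.2

lemma disjoint_frontier (hΩ : IsJordanDomain Ω) : Disjoint Ω (frontier Ω) :=
  (disjoint_frontier_iff_isOpen.2 hΩ.isOpen).symm

lemma interior_closure_eq (hΩ : IsJordanDomain Ω) : interior (closure Ω) = Ω := by
  have hfr : frontier (interior (closure Ω)) = frontier Ω := by
    refine hΩ.isJordanCurve_frontier.frontier_eq_of_subset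
      (hΩ.isBounded.closure.subset interior_subset)
      (frontier_interior_subset.trans frontier_closure_subset) ?_
    obtain ⟨q, hq⟩ := hΩ.isConnected.nonempty
    exact ⟨q, hΩ.isOpen.subset_interior_closure hq, disjoint_left.1 hΩ.disjoint_frontier hq⟩
  refine Subset.antisymm (fun x hx => ?_) hΩ.isOpen.subset_interior_closure
  by_contra hxΩ
  have hxfr : x ∈ frontier (interior (closure Ω)) :=
    hfr ▸ hΩ.isOpen.frontier_eq ▸ ⟨interior_subset hx, hxΩ⟩
  exact disjoint_left.1 (disjoint_frontier_iff_isOpen.2 isOpen_interior) hxfr hx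

lemma disjoint_frontier_of_frontier_subset (hΩ : IsJordanDomain Ω) {W : Set ℂ} (hW : IsOpen W)
    (hWb : Bornology.IsBounded W) (hfr : frontier W ⊆ closure Ω) : Disjoint W (frontier Ω) := by
  have hunion : frontier (W ∪ Ω) = frontier Ω := by
    refine hΩ.isJordanCurve_frontier.frontier_eq_of_subset (hWb.union hΩ.isBounded)
      (fun x hx => ?_) ?_
    · rw [(hW.union hΩ.isOpen).frontier_eq, closure_union] at hx
      rw [hΩ.isOpen.frontier_eq]
      have hxW : x ∉ W := fun h => hx.2 (.inl h)
      exact ⟨hx.1.elim (fun h => hfr (hW.frontier_eq ▸ ⟨h, hxW⟩)) id, fun h => hx.2 (.inr h)⟩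
    · obtain ⟨q, hq⟩ := hΩ.isConnected.nonempty
      exact ⟨q, .inr hq, disjoint_left.1 hΩ.disjoint_frontier hq⟩
  rw [← hunion]
  exact (disjoint_frontier_iff_isOpen.2 (hW.union hΩ.isOpen)).symm.mono_left subset_union_left

lemma subset_of_frontier_subset (hΩ : IsJordanDomain Ω) {W A : Set ℂ} (hW : IsOpen W)
    (hWc : IsConnected W) (hWb : Bornology.IsBounded W) (hA : A ⊂ frontier Ω)
    (hfr : frontier W ⊆ Ω ∪ A) : W ⊆ Ω := by
  have hdisj := hΩ.disjoint_frontier_of_frontier_subset hW hWb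
    (hfr.trans (union_subset subset_closure (hA.subset.trans frontier_subset_closure)))
  refine subset_of_disjoint_frontier hWc.isPreconnected hΩ.isOpen ?_ hdisj
  by_contra hempty
  have hWΩ : Disjoint (closure W) Ω :=
    (disjoint_iff_inter_eq_empty.2 (not_nonempty_iff_eq_empty.1 hempty)).closure_left hΩ.isOpen
  have hfrA : frontier W ⊆ A := fun x hx =>
    (hfr hx).resolve_left (disjoint_left.1 hWΩ (frontier_subset_closure hx))
  obtain ⟨q, hq⟩ := hWc.nonempty
  have heq := hΩ.isJordanCurve_frontier.frontier_eq_of_subset hWb (hfrA.trans hA.subset)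
    ⟨q, hq, disjoint_left.1 hdisj hq⟩
  exact hA.not_subset (heq ▸ hfrA)

end IsJordanDomain

lemma IsJordanCurve.exists_isJordanDomain {K : Set ℂ} {p q : ℂ} (hpq : p ≠ q)
    (hK : IsPreconnected K) (hKc : IsCompact K) (hmid : midpoint ℝ p q ∉ K) (hp : p ∈ K)
    (hq : q ∈ K) (hJ : IsJordanCurve (segment ℝ p q ∪ K)) :
    ∃ W, IsJordanDomain W ∧ frontier W = segment ℝ p q ∪ K := by
  obtain ⟨z, hz, hlog⟩ :=
    exists_not_hasContinuousLogOn_segment_union hpq hK hKc.isClosed hmid hp hq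
  have hcompact : IsCompact (segment ℝ p q ∪ K) :=
    (segment_eq_image_lineMap ℝ p q ▸ isCompact_Icc.image AffineMap.lineMap_continuous).union hKc
  set J := segment ℝ p q ∪ K
  have hbdd := isBounded_connectedComponentIn_of_not_hasContinuousLogOn hcompact hz hlog
  have hfr : frontier (connectedComponentIn Jᶜ z) = J :=
    hJ.frontier_eq_of_subset hbdd
      (frontier_connectedComponentIn_compl_subset hcompact.isClosed z)
      ⟨z, mem_connectedComponentIn hz, hz⟩
  exact ⟨connectedComponentIn Jᶜ z, isJordanDomain_iff.2
    ⟨hcompact.isClosed.isOpen_compl.connectedComponentIn,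
      isConnected_connectedComponentIn_iff.2 hz, hbdd, by rwa [hfr]⟩, hfr⟩

end JordanDomains

section AccessibleArcs

open Filter Topology

variable {E : Type*} [NormedAddCommGroup E] [NormedSpace ℝ E] {Ω K : Set E} {p q p' q' x y : E}
  {φ ψ : C(ℝ, E)} {s t : ℝ}

/-- The path that runs along `φ` from `φ 0` to `φ s` during `[0, 1/2]`, and then along the segment
from `φ s` to `y` during `[1/2, 1]`. -/
def arcAppend (φ : C(ℝ, E)) (s : ℝ) (y : E) : C(ℝ, E) where
  toFun t := φ (s * min (2 * t) 1) + max (2 * t - 1) 0 • (y - φ s)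
  continuous_toFun := by fun_prop

lemma arcAppend_of_le (φ : C(ℝ, E)) (s : ℝ) (y : E) (ht : t ≤ 1 / 2) :
    arcAppend φ s y t = φ (s * (2 * t)) := by
  have hmin : min (2 * t) 1 = 2 * t := min_eq_left (by linarith)
  have hmax : max (2 * t - 1) 0 = 0 := max_eq_right (by linarith)
  simp [arcAppend, hmin, hmax]

lemma arcAppend_of_ge (φ : C(ℝ, E)) (s : ℝ) (y : E) (ht : 1 / 2 ≤ t) :
    arcAppend φ s y t = AffineMap.lineMap (φ s) y (2 * t - 1) := by
  have hmin : min (2 * t) 1 = 1 := min_eq_right (by linarith)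
  have hmax : max (2 * t - 1) 0 = 2 * t - 1 := max_eq_left (by linarith)
  simp [arcAppend, hmin, hmax, AffineMap.lineMap_apply, add_comm]

lemma arcAppend_zero (φ : C(ℝ, E)) (s : ℝ) (y : E) : arcAppend φ s y 0 = φ 0 := by
  rw [arcAppend_of_le φ s y (by norm_num), mul_zero, mul_zero]

lemma arcAppend_one (φ : C(ℝ, E)) (s : ℝ) (y : E) : arcAppend φ s y 1 = y := by
  rw [arcAppend_of_ge φ s y (by norm_num)]
  norm_num

lemma mapsTo_arcAppend (hK : Convex ℝ K) (hs : φ s ∈ K) (hy : y ∈ K) :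
    MapsTo (arcAppend φ s y) (Icc (1 / 2) 1) K := fun t ht => by
  rw [arcAppend_of_ge φ s y ht.1]
  exact hK.lineMap_mem hs hy ⟨by linarith [ht.1], by linarith [ht.2]⟩

lemma injOn_arcAppend (hφ : InjOn φ (Icc 0 1)) (hs : s ∈ Ioc (0 : ℝ) 1) (hK : Convex ℝ K)
    (hsK : φ s ∈ K) (hlt : ∀ t ∈ Ico 0 s, φ t ∉ K) (hy : y ∈ K) (hne : φ s ≠ y) :
    InjOn (arcAppend φ s y) (Icc 0 1) := by
  have hmem : ∀ t ∈ Ico (0 : ℝ) (1 / 2), s * (2 * t) ∈ Ico 0 s := fun t ht =>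
    ⟨mul_nonneg hs.1.le (by linarith [ht.1]), by nlinarith [hs.1, ht.2]⟩
  rw [← Ico_union_Icc_eq_Icc (by norm_num : (0 : ℝ) ≤ 1 / 2) (by norm_num),
    injOn_union (disjoint_left.2 fun t ht ht' => ht.2.not_ge ht'.1)]
  refine ⟨fun t ht u hu e => ?_, fun t ht u hu e => ?_, fun t ht u hu e => ?_⟩
  · rw [arcAppend_of_le φ s y ht.2.le, arcAppend_of_le φ s y hu.2.le] at e
    have hsub : Ico 0 s ⊆ Icc 0 1 := Ico_subset_Icc_self.trans (Icc_subset_Icc_right hs.2)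
    have := mul_left_cancel₀ hs.1.ne' (hφ (hsub (hmem t ht)) (hsub (hmem u hu)) e)
    linarith
  · rw [arcAppend_of_ge φ s y ht.1, arcAppend_of_ge φ s y hu.1] at e
    have := AffineMap.lineMap_injective ℝ hne e
    linarith
  · refine hlt _ (hmem t ht) ?_
    rw [← arcAppend_of_le φ s y ht.2.le, e]
    exact mapsTo_arcAppend hK hsK hy hu

lemma tendsto_const_mul_nhdsGE_zero {c : ℝ} (hc : 0 ≤ c) :
    Tendsto (fun t => c * t) (𝓝[≥] 0) (𝓝[≥] 0) :=
  tendsto_nhdsWithin_iff.2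
    ⟨(Continuous.tendsto' (by fun_prop) 0 0 (mul_zero c)).mono_left nhdsWithin_le_nhds,
      eventually_mem_nhdsWithin.mono fun _ ht => mul_nonneg hc ht⟩

lemma eventually_arcAppend_mem {A : Set E} (hφ : ∀ᶠ t in 𝓝[≥] 0, φ t ∈ A) (hs : 0 < s) (y : E) :
    ∀ᶠ t in 𝓝[≥] 0, arcAppend φ s y t ∈ A := by
  filter_upwards [(tendsto_const_mul_nhdsGE_zero (by positivity : 0 ≤ s * 2)).eventually hφ,
    nhdsWithin_le_nhds (Iic_mem_nhds one_half_pos)] with t ht hle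
  rwa [arcAppend_of_le φ s y hle, ← mul_assoc]

lemma exists_first_mem {X : Type*} [TopologicalSpace X] {f : ℝ → X} {K : Set X}
    (hf : ContinuousOn f (Icc 0 1)) (hK : IsClosed K) (h0 : f 0 ∉ K) (h1 : f 1 ∈ K) :
    ∃ s ∈ Ioc (0 : ℝ) 1, f s ∈ K ∧ ∀ t ∈ Ico 0 s, f t ∉ K := by
  have hcompact : IsCompact (Icc 0 1 ∩ f ⁻¹' K) :=
    isCompact_Icc.of_isClosed_subset (hf.preimage_isClosed_of_isClosed isClosed_Icc hK)
      inter_subset_left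
  obtain ⟨s, ⟨hs, hsK⟩, hmin⟩ := hcompact.exists_isLeast ⟨1, right_mem_Icc.2 zero_le_one, h1⟩
  refine ⟨s, ⟨hs.1.lt_of_ne fun h => h0 (h ▸ hsK), hs.2⟩, hsK, fun t ht htK => ?_⟩
  exact ht.2.not_ge (hmin ⟨⟨ht.1, ht.2.le.trans hs.2⟩, htK⟩)

/-- The point `p` is linearly accessible from `Ω`: the half-open segment from the interior point
`q` to `p` stays in `Ω`. -/
structure IsAccessibleFrom (Ω : Set E) (p q : E) : Prop where
  notMem : p ∉ Ω
  mem : q ∈ Ω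
  segment_diff_subset : segment ℝ p q \ {p} ⊆ Ω

lemma IsAccessibleFrom.ne (h : IsAccessibleFrom Ω p q) : p ≠ q := fun e => h.notMem (e ▸ h.mem)

lemma IsAccessibleFrom.segment_subset (h : IsAccessibleFrom Ω p q) :
    segment ℝ p q ⊆ insert p Ω := by
  rw [← sdiff_singleton_subset_iff]
  exact h.segment_diff_subset

/-- `φ` restricted to `[0, 1]` is a simple arc from the accessible point `p` to the point `y`, lying
in `Ω` except for its origin, and leaving `p` along the segment towards `q`. -/
structure IsAccessArc (Ω : Set E) (p q y : E) (φ : C(ℝ, E)) : Prop where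
  injOn : InjOn φ (Icc 0 1)
  source : φ 0 = p
  target : φ 1 = y
  mem : ∀ t ∈ Ioc (0 : ℝ) 1, φ t ∈ Ω
  eventually_mem_segment : ∀ᶠ t in 𝓝[≥] 0, φ t ∈ segment ℝ p q

lemma IsAccessibleFrom.exists_isAccessArc_self (h : IsAccessibleFrom Ω p q) :
    ∃ φ, IsAccessArc Ω p q q φ := by
  refine ⟨⟨AffineMap.lineMap p q, AffineMap.lineMap_continuous⟩,
    (AffineMap.lineMap_injective ℝ h.ne).injOn, AffineMap.lineMap_apply_zero p q,
    AffineMap.lineMap_apply_one p q, fun t ht => ?_, ?_⟩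
  · refine h.segment_diff_subset ⟨?_, fun e => ht.1.ne' ?_⟩
    · exact segment_eq_image_lineMap ℝ p q ▸ mem_image_of_mem _ (Ioc_subset_Icc_self ht)
    · exact AffineMap.lineMap_injective ℝ h.ne (e.trans (AffineMap.lineMap_apply_zero p q).symm)
  · filter_upwards [Icc_mem_nhdsGE zero_lt_one] with t ht
    exact segment_eq_image_lineMap ℝ p q ▸ mem_image_of_mem _ ht

namespace IsAccessArc

lemma truncate (h : IsAccessArc Ω p q x φ) (hs : s ∈ Ioc (0 : ℝ) 1) :
    IsAccessArc Ω p q (φ s) (φ.comp ⟨fun t => s * t, by fun_prop⟩) where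
  injOn t ht u hu e := mul_left_cancel₀ hs.1.ne' <| h.injOn
    ⟨mul_nonneg hs.1.le ht.1, mul_le_one₀ hs.2 ht.1 ht.2⟩
    ⟨mul_nonneg hs.1.le hu.1, mul_le_one₀ hs.2 hu.1 hu.2⟩ e
  source := by simp [h.source]
  target := by simp
  mem t ht := h.mem _ ⟨mul_pos hs.1 ht.1, mul_le_one₀ hs.2 ht.1.le ht.2⟩
  eventually_mem_segment :=
    (tendsto_const_mul_nhdsGE_zero hs.1.le).eventually h.eventually_mem_segment

lemma arcAppend_mem (h : IsAccessArc Ω p q x φ) (hs : s ∈ Ioc (0 : ℝ) 1)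
    (ht : t ∈ Ioc (0 : ℝ) (1 / 2)) : arcAppend φ s y t ∈ Ω := by
  rw [arcAppend_of_le φ s y ht.2]
  exact h.mem _ ⟨mul_pos hs.1 (by linarith [ht.1]),
    mul_le_one₀ hs.2 (by linarith [ht.1]) (by linarith [ht.2])⟩

lemma exists_of_convex (h : IsAccessArc Ω p q x φ) (hp : p ∉ Ω) (hK : Convex ℝ K)
    (hKc : IsClosed K) (hKΩ : K ⊆ Ω) (hx : x ∈ K) (hy : y ∈ K) : ∃ φ', IsAccessArc Ω p q y φ' := by
  obtain ⟨s, hs, hsK, hlt⟩ := exists_first_mem φ.continuous.continuousOn hKc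
    (by rw [h.source]; exact fun hpK => hp (hKΩ hpK)) (by rwa [h.target])
  rcases eq_or_ne (φ s) y with rfl | hne
  · exact ⟨_, h.truncate hs⟩
  refine ⟨arcAppend φ s y, injOn_arcAppend h.injOn hs hK hsK hlt hy hne,
    (arcAppend_zero φ s y).trans h.source, arcAppend_one φ s y, fun t ht => ?_,
    eventually_arcAppend_mem h.eventually_mem_segment hs.1 y⟩
  rcases le_total t (1 / 2) with hle | hle
  · exact h.arcAppend_mem hs ⟨ht.1, hle⟩
  · exact hKΩ (mapsTo_arcAppend hK hsK hy ⟨hle, ht.2⟩)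

end IsAccessArc

lemma IsAccessibleFrom.exists_isAccessArc (h : IsAccessibleFrom Ω p q) (hΩ : IsOpen Ω)
    (hΩc : IsPreconnected Ω) (hy : y ∈ Ω) : ∃ φ, IsAccessArc Ω p q y φ := by
  refine hΩc.induction₂' (fun x y => (∃ φ, IsAccessArc Ω p q x φ) → ∃ φ, IsAccessArc Ω p q y φ)
    (fun x hx => ?_) (fun _ _ _ _ _ _ hxy hyz hx => hyz (hxy hx)) h.mem hy
    h.exists_isAccessArc_self
  obtain ⟨r, hr, hball⟩ := nhds_basis_closedBall.mem_iff.1 (hΩ.mem_nhds hx)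
  filter_upwards [nhdsWithin_le_nhds (closedBall_mem_nhds x hr)] with y hy
  exact ⟨fun ⟨φ, hφ⟩ => hφ.exists_of_convex h.notMem (convex_closedBall x r) isClosed_closedBall
      hball (mem_closedBall_self hr.le) hy,
    fun ⟨φ, hφ⟩ => hφ.exists_of_convex h.notMem (convex_closedBall x r) isClosed_closedBall
      hball hy (mem_closedBall_self hr.le)⟩

/-- `ψ` restricted to `[0, 1]` is a crosscut of `Ω` joining the accessible points `p` and `p'`: it
leaves `p` along the segment towards `q`, and its second half runs straight to `p'` along the
segment from `q'`. -/
structure IsCrosscut (Ω : Set E) (p q p' q' : E) (ψ : C(ℝ, E)) : Prop where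
  injOn : InjOn ψ (Icc 0 1)
  source : ψ 0 = p
  target : ψ 1 = p'
  mem : ∀ t ∈ Ioo (0 : ℝ) 1, ψ t ∈ Ω
  eventually_mem_segment : ∀ᶠ t in 𝓝[≥] 0, ψ t ∈ segment ℝ p q
  mapsTo_segment : MapsTo ψ (Icc (1 / 2) 1) (segment ℝ p' q')
  eqOn_lineMap : EqOn ψ (fun t => AffineMap.lineMap (ψ (1 / 2)) p' (2 * t - 1)) (Icc (1 / 2) 1)

lemma IsAccessibleFrom.exists_isCrosscut (h : IsAccessibleFrom Ω p q)
    (h' : IsAccessibleFrom Ω p' q') (hΩ : IsOpen Ω) (hΩc : IsPreconnected Ω) (hne : p ≠ p') :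
    ∃ ψ, IsCrosscut Ω p q p' q' ψ := by
  obtain ⟨φ, hφ⟩ := h.exists_isAccessArc hΩ hΩc h'.mem
  have hclosed : IsClosed (segment ℝ p' q') :=
    segment_eq_image_lineMap ℝ p' q' ▸
      (isCompact_Icc.image AffineMap.lineMap_continuous).isClosed
  obtain ⟨s, hs, hsK, hlt⟩ := exists_first_mem φ.continuous.continuousOn hclosed
    (fun hmem => h.notMem (h'.segment_diff_subset ⟨hφ.source ▸ hmem, hne⟩))
    (hφ.target ▸ right_mem_segment ℝ p' q')
  have hp' := left_mem_segment ℝ p' q'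
  have hconv := convex_segment (𝕜 := ℝ) p' q'
  have hinj : InjOn (arcAppend φ s p') (Icc 0 1) := injOn_arcAppend hφ.injOn hs hconv hsK hlt hp'
    fun e => h'.notMem (e ▸ hφ.mem s hs)
  have hend := mapsTo_arcAppend hconv hsK hp'
  refine ⟨arcAppend φ s p', hinj, (arcAppend_zero φ s p').trans hφ.source, arcAppend_one φ s p',
    fun t ht => ?_, eventually_arcAppend_mem hφ.eventually_mem_segment hs.1 p', hend,
    fun t ht => ?_⟩
  · rcases le_total t (1 / 2) with hle | hle
    · exact hφ.arcAppend_mem hs ⟨ht.1, hle⟩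
    · refine h'.segment_diff_subset ⟨hend ⟨hle, ht.2.le⟩, fun e => ht.2.ne ?_⟩
      exact hinj (Ioo_subset_Icc_self ht) (right_mem_Icc.2 zero_le_one)
        (e.trans (arcAppend_one φ s p').symm)
  · beta_reduce
    rw [arcAppend_of_ge φ s p' ht.1, arcAppend_of_le φ s p' le_rfl, mul_one_div_cancel two_ne_zero,
      mul_one]

lemma IsCrosscut.exists_rat_mapsTo (hψ : IsCrosscut Ω p q p' q' ψ) :
    ∃ τ : ℚ, MapsTo ψ (Icc 0 τ) (segment ℝ p q) ∧ MapsTo ψ (Icc (1 - τ) 1) (segment ℝ p' q') ∧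
      MapsTo ψ (Icc (τ : ℝ) (1 - τ)) Ω := by
  obtain ⟨σ, hσ, hσseg⟩ := mem_nhdsGE_iff_exists_Icc_subset.1 hψ.eventually_mem_segment
  obtain ⟨τ, hτ, hτσ⟩ := exists_rat_btwn (lt_min hσ (one_half_pos (α := ℝ)))
  have hτhalf := hτσ.trans_le (min_le_right σ (1 / 2))
  exact ⟨τ, fun t ht => hσseg ⟨ht.1, ht.2.trans (hτσ.trans_le (min_le_left _ _)).le⟩,
    fun t ht => hψ.mapsTo_segment ⟨by linarith [ht.1], ht.2⟩,
    fun t ht => hψ.mem t ⟨hτ.trans_le ht.1, by linarith [ht.2]⟩⟩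

lemma mapsTo_Icc_of_isAccessibleFrom (h : IsAccessibleFrom Ω p q) (h' : IsAccessibleFrom Ω p' q')
    {f : ℝ → E} {τ : ℝ} (hsource : MapsTo f (Icc 0 τ) (segment ℝ p q))
    (htarget : MapsTo f (Icc (1 - τ) 1) (segment ℝ p' q'))
    (hmiddle : MapsTo f (Icc τ (1 - τ)) Ω) : MapsTo f (Icc 0 1) (Ω ∪ {p, p'}) := fun t ht => by
  rcases le_total t τ with hle | hle
  · exact (h.segment_subset (hsource ⟨ht.1, hle⟩)).symm.imp_right .inl
  rcases le_total (1 - τ) t with hge | hge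
  · exact (h'.segment_subset (htarget ⟨hge, ht.2⟩)).symm.imp_right .inr
  · exact .inl (hmiddle ⟨hle, hge⟩)

lemma segment_diff_singleton_subset_ball (p q : E) : segment ℝ p q \ {p} ⊆ ball q (dist p q) := by
  rintro z ⟨hz, hzp⟩
  obtain ⟨t, ht, rfl⟩ := segment_eq_image_lineMap ℝ p q ▸ hz
  have ht0 : t ≠ 0 := fun h => hzp (by rw [h, AffineMap.lineMap_apply_zero]; rfl)
  have hpq : p ≠ q := fun h => hzp (by rw [h, AffineMap.lineMap_same_apply]; rfl)
  rw [mem_ball, dist_lineMap_right, Real.norm_of_nonneg (sub_nonneg.2 ht.2)]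
  exact mul_lt_of_lt_one_left (dist_pos.2 hpq) (sub_lt_self _ (ht.1.lt_of_ne ht0.symm))

end AccessibleArcs

section BoundaryArcs

/-- `γ` restricted to `[a, b]` is a simple arc in the boundary of the Jordan domain `W`. -/
structure IsBoundaryArc (W : Set ℂ) (γ : ℝ → ℂ) (a b : ℝ) : Prop where
  isJordanDomain : IsJordanDomain W
  lt : a < b
  continuousOn : ContinuousOn γ (Icc a b)
  injOn : InjOn γ (Icc a b)
  mapsTo_frontier : MapsTo γ (Icc a b) (frontier W)

lemma IsBoundaryArc.mono {W : Set ℂ} {γ : ℝ → ℂ} {a b c d : ℝ} (h : IsBoundaryArc W γ a b)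
    (hcd : c < d) (hac : a ≤ c) (hdb : d ≤ b) : IsBoundaryArc W γ c d where
  isJordanDomain := h.isJordanDomain
  lt := hcd
  continuousOn := h.continuousOn.mono (Icc_subset_Icc hac hdb)
  injOn := h.injOn.mono (Icc_subset_Icc hac hdb)
  mapsTo_frontier := h.mapsTo_frontier.mono_left (Icc_subset_Icc hac hdb)

lemma IsBoundaryArc.notMem {W : Set ℂ} {γ : ℝ → ℂ} {a b t : ℝ} (h : IsBoundaryArc W γ a b)
    (ht : t ∈ Icc a b) : γ t ∉ W :=
  disjoint_right.1 h.isJordanDomain.disjoint_frontier (h.mapsTo_frontier ht)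

section Crosscuts

variable {Ω : Set ℂ} {γ : ℝ → ℂ} {a b : ℝ} {q q' : ℂ} {ψ : C(ℝ, ℂ)}

lemma IsCrosscut.image_Icc_half_one {p p' : ℂ} (hψ : IsCrosscut Ω p q p' q' ψ) :
    ψ '' Icc (1 / 2) 1 = segment ℝ (ψ (1 / 2)) p' := by
  have hIcc : (fun t : ℝ => 2 * t - 1) '' Icc (1 / 2) 1 = Icc 0 1 := by
    simp_rw [sub_eq_add_neg]
    rw [image_affine_Icc' two_pos]
    norm_num
  rw [hψ.eqOn_lineMap.image_eq, segment_eq_image_lineMap, ← hIcc, image_image]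

lemma IsCrosscut.midpoint_eq {p p' : ℂ} (hψ : IsCrosscut Ω p q p' q' ψ) :
    midpoint ℝ (ψ (1 / 2)) p' = ψ (3 / 4) := by
  rw [hψ.eqOn_lineMap (by norm_num : (3 / 4 : ℝ) ∈ Icc (1 / 2) 1), midpoint]
  norm_num

lemma IsCrosscut.notMem_image {p p' : ℂ} {S : Set ℝ} {t : ℝ} (hψ : IsCrosscut Ω p q p' q' ψ)
    (hγΩ : ∀ t ∈ S, γ t ∉ Ω) (ht : t ∈ Ioo (0 : ℝ) 1) : ψ t ∉ γ '' S := by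
  rintro ⟨u, hu, e⟩
  exact hγΩ u hu (e ▸ hψ.mem t ht)

lemma IsCrosscut.isJordanCurve (hψ : IsCrosscut Ω (γ a) q (γ b) q' ψ) (hab : a < b)
    (hγ : ContinuousOn γ (Icc a b)) (hinj : InjOn γ (Icc a b))
    (hγΩ : ∀ t ∈ Icc a b, γ t ∉ Ω) : IsJordanCurve (γ '' Icc a b ∪ ψ '' Icc 0 1) := by
  have himage : (γ ∘ AffineMap.lineMap a b) '' Icc (0 : ℝ) 1 = γ '' Icc a b := by
    rw [image_comp, ← segment_eq_image_lineMap, segment_eq_Icc hab.le]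
  have hmaps : MapsTo (AffineMap.lineMap a b) (Icc (0 : ℝ) 1) (Icc a b) := by
    rw [mapsTo_iff_image_subset, ← segment_eq_image_lineMap, segment_eq_Icc hab.le]
  rw [← himage]
  refine isJordanCurve_union_of_arcs (hγ.comp (by fun_prop) hmaps)
    (hinj.comp (AffineMap.lineMap_injective ℝ hab.ne).injOn hmaps) ψ.continuous.continuousOn
    hψ.injOn (by simp [hψ.source]) (by simp [hψ.target]) ?_
  rw [himage]
  exact fun t ht => hψ.notMem_image hγΩ ht

lemma IsCrosscut.exists_isBoundaryArc (hψ : IsCrosscut Ω (γ a) q (γ b) q' ψ) (hab : a < b)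
    (hγ : ContinuousOn γ (Icc a b)) (hinj : InjOn γ (Icc a b))
    (hγΩ : ∀ t ∈ Icc a b, γ t ∉ Ω) :
    ∃ W, IsBoundaryArc W γ a b ∧ frontier W = γ '' Icc a b ∪ ψ '' Icc 0 1 := by
  have hhalf : (1 / 2 : ℝ) ∈ Ioo (0 : ℝ) 1 := by norm_num
  have hsplit : γ '' Icc a b ∪ ψ '' Icc 0 1 =
      segment ℝ (ψ (1 / 2)) (γ b) ∪ (ψ '' Icc 0 (1 / 2) ∪ γ '' Icc a b) := by
    rw [← Icc_union_Icc_eq_Icc hhalf.1.le hhalf.2.le, image_union, hψ.image_Icc_half_one,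
      union_comm, ← union_assoc, union_comm (segment _ _ _)]
  have ha := left_mem_Icc.2 hab.le
  have hb := right_mem_Icc.2 hab.le
  have hK : IsPreconnected (ψ '' Icc 0 (1 / 2) ∪ γ '' Icc a b) :=
    (isPreconnected_Icc.image _ ψ.continuous.continuousOn).union (γ a)
      ⟨0, left_mem_Icc.2 hhalf.1.le, hψ.source⟩ (mem_image_of_mem γ ha)
      (isPreconnected_Icc.image _ hγ)
  have hmid : midpoint ℝ (ψ (1 / 2)) (γ b) ∉ ψ '' Icc 0 (1 / 2) ∪ γ '' Icc a b := by
    rw [hψ.midpoint_eq]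
    rintro (⟨t, ht, e⟩ | hmem)
    · have := hψ.injOn ⟨ht.1, ht.2.trans hhalf.2.le⟩ (by norm_num) e
      linarith [ht.2]
    · exact hψ.notMem_image hγΩ (by norm_num) hmem
  have hJ := hψ.isJordanCurve hab hγ hinj hγΩ
  rw [hsplit] at hJ
  obtain ⟨W, hW, hfr⟩ := hJ.exists_isJordanDomain
    (fun e : ψ (1 / 2) = γ b => hψ.notMem_image hγΩ hhalf (e ▸ mem_image_of_mem γ hb)) hK
    ((isCompact_Icc.image ψ.continuous).union (isCompact_Icc.image_of_continuousOn hγ)) hmid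
    (.inl (mem_image_of_mem ψ (right_mem_Icc.2 hhalf.1.le))) (.inr (mem_image_of_mem γ hb))
  rw [← hsplit] at hfr
  exact ⟨W, ⟨hW, hab, hγ, hinj, fun t ht => hfr ▸ .inl (mem_image_of_mem γ ht)⟩, hfr⟩

end Crosscuts

end BoundaryArcs

section CountableFamily

variable {Ω W : Set ℂ} {γ : ℝ → ℂ} {a b t₁ t₂ u v : ℝ}

/-- The parameters in `[u, v]` of the points of the arc `γ` that are nearest to `q`. -/
def nearestParams (γ : ℝ → ℂ) (u v : ℝ) (q : ℂ) : Set ℝ :=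
  {a ∈ Icc u v | IsMinOn (fun t => dist (γ t) q) (Icc u v) a}

lemma nearestParams_nonempty (huv : u ≤ v) (hγ : ContinuousOn γ (Icc u v)) (q : ℂ) :
    (nearestParams γ u v q).Nonempty :=
  isCompact_Icc.exists_isMinOn (nonempty_Icc.2 huv) (by fun_prop)

lemma IsBoundaryArc.exists_isAccessibleFrom (h : IsBoundaryArc Ω γ u v) {D : Set ℂ}
    (hD : Dense D) : ∃ q ∈ D, ∀ a ∈ nearestParams γ u v q, IsAccessibleFrom Ω (γ a) q := by
  obtain ⟨m, hm⟩ := nonempty_Ioo.2 h.lt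
  have hmIcc := Ioo_subset_Icc_self hm
  obtain ⟨ε, hε, hball⟩ := mem_nhdsWithin_iff.1
    (h.isJordanDomain.isJordanCurve_frontier.image_Ioo_mem_nhdsWithin h.continuousOn h.injOn
      h.mapsTo_frontier hm)
  obtain ⟨x, hx, hxΩ⟩ := mem_closure_iff.1 (frontier_subset_closure (h.mapsTo_frontier hmIcc))
    (ball (γ m) (ε / 2)) isOpen_ball (mem_ball_self (half_pos hε))
  obtain ⟨q, ⟨hqm, hqΩ⟩, hqD⟩ :=
    hD.inter_open_nonempty _ (isOpen_ball.inter h.isJordanDomain.isOpen) ⟨x, hx, hxΩ⟩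
  refine ⟨q, hqD, fun a ⟨ha, hmin⟩ => ⟨h.notMem ha, hqΩ, ?_⟩⟩
  have hdist : dist (γ a) q < ε / 2 :=
    lt_of_le_of_lt (show dist (γ a) q ≤ dist (γ m) q from hmin hmIcc) (mem_ball'.1 hqm)
  refine (segment_diff_singleton_subset_ball (γ a) q).trans
    (subset_of_disjoint_frontier (convex_ball q _).isPreconnected h.isJordanDomain.isOpen
      ⟨q, mem_ball_self (dist_pos.2 fun e => h.notMem ha (e ▸ hqΩ)), hqΩ⟩ ?_)
  refine disjoint_left.2 fun z hz hzfr => ?_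
  have hzm : dist z (γ m) < ε := by
    linarith [dist_triangle z q (γ m), mem_ball.1 hz, hdist, mem_ball.1 hqm]
  obtain ⟨t, ht, rfl⟩ := hball ⟨hzm, hzfr⟩
  exact (mem_ball.1 hz).not_ge (hmin (Ioo_subset_Icc_self ht))

lemma IsBoundaryArc.closure_subset (hΩ : IsBoundaryArc Ω γ t₁ t₂) (hW : IsBoundaryArc W γ a b)
    (ha : t₁ < a) (hb : b < t₂) (hfr : frontier W ⊆ Ω ∪ γ '' Icc a b) :
    W ⊆ Ω ∧ closure W ⊆ Ω ∪ γ '' Ioo t₁ t₂ := by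
  have hsub : Icc a b ⊆ Icc t₁ t₂ := Icc_subset_Icc ha.le hb.le
  have ht₁ : t₁ ∈ Icc t₁ t₂ := left_mem_Icc.2 hΩ.lt.le
  have hssub : γ '' Icc a b ⊂ frontier Ω := by
    refine ssubset_of_subset_not_subset (hΩ.mapsTo_frontier.mono_left hsub).image_subset
      fun hle => ?_
    obtain ⟨t, ht, e⟩ := hle (hΩ.mapsTo_frontier ht₁)
    exact (ha.trans_le ht.1).ne (hΩ.injOn ht₁ (hsub ht) e.symm)
  have hWΩ : W ⊆ Ω := hΩ.isJordanDomain.subset_of_frontier_subset hW.isJordanDomain.isOpen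
    hW.isJordanDomain.isConnected hW.isJordanDomain.isBounded hssub hfr
  refine ⟨hWΩ, ?_⟩
  rw [closure_eq_self_union_frontier]
  exact union_subset (hWΩ.trans subset_union_left)
    (hfr.trans (union_subset_union_right Ω (image_mono (Icc_subset_Ioo ha hb))))

/-- The triples `(a, b, ψ)` such that `γ a` and `γ b` are points of `γ '' [u, v]` and
`γ '' [u', v']` nearest to `q` and `q'`, the path `ψ` starts on the segment from `γ a` to `q` during
`[0, τ]` and finishes on the segment from `q'` to `γ b` during `[1 - τ, 1]`, and `γ` on `[a, b]` and
`ψ` on `[0, 1]` together bound a Jordan domain. -/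
def crosscutFamily (γ : ℝ → ℂ) (u v : ℝ) (q : ℂ) (u' v' : ℝ) (q' : ℂ) (τ : ℝ) :
    Set (ℝ × ℝ × C(ℝ, ℂ)) :=
  {x | x.1 ∈ nearestParams γ u v q ∧ x.2.1 ∈ nearestParams γ u' v' q' ∧
    MapsTo x.2.2 (Icc 0 τ) (segment ℝ (γ x.1) q) ∧
    MapsTo x.2.2 (Icc (1 - τ) 1) (segment ℝ (γ x.2.1) q') ∧
    ∃ W, IsBoundaryArc W γ x.1 x.2.1 ∧ frontier W = γ '' Icc x.1 x.2.1 ∪ x.2.2 '' Icc 0 1}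

lemma IsBoundaryArc.exists_rat_isAccessibleFrom (h : IsBoundaryArc Ω γ t₁ t₂) {D : Set ℂ}
    (hD : Dense D) : ∃ u v : ℚ, t₁ < u ∧ (u : ℝ) < v ∧ v < t₂ ∧
      ∃ q ∈ D, ∀ a ∈ nearestParams γ u v q, IsAccessibleFrom Ω (γ a) q := by
  obtain ⟨u, hu, hut⟩ := exists_rat_btwn h.lt
  obtain ⟨v, huv, hv⟩ := exists_rat_btwn hut
  exact ⟨u, v, hu, huv, hv, (h.mono huv hu.le hv.le).exists_isAccessibleFrom hD⟩

lemma IsBoundaryArc.exists_mem_crosscutFamily (h : IsBoundaryArc Ω γ t₁ t₂) {u' v' : ℝ}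
    {q q' : ℂ} (hu : t₁ ≤ u) (huv : u ≤ v) (hvu : v < u') (huv' : u' ≤ v') (hv : v' ≤ t₂)
    (hq : ∀ a ∈ nearestParams γ u v q, IsAccessibleFrom Ω (γ a) q)
    (hq' : ∀ b ∈ nearestParams γ u' v' q', IsAccessibleFrom Ω (γ b) q') :
    ∃ τ : ℚ, ∃ x ∈ crosscutFamily γ u v q u' v' q' τ, MapsTo x.2.2 (Icc (τ : ℝ) (1 - τ)) Ω := by
  obtain ⟨a, ha⟩ := nearestParams_nonempty huv
    (h.continuousOn.mono (Icc_subset_Icc hu (by linarith))) q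
  obtain ⟨b, hb⟩ := nearestParams_nonempty huv'
    (h.continuousOn.mono (Icc_subset_Icc (by linarith) hv)) q'
  have hab : IsBoundaryArc Ω γ a b :=
    h.mono (by linarith [ha.1.2, hb.1.1]) (hu.trans ha.1.1) (hb.1.2.trans hv)
  have hne : γ a ≠ γ b := fun e => hab.lt.ne
    (hab.injOn (left_mem_Icc.2 hab.lt.le) (right_mem_Icc.2 hab.lt.le) e)
  obtain ⟨ψ, hψ⟩ := (hq a ha).exists_isCrosscut (hq' b hb) h.isJordanDomain.isOpen
    h.isJordanDomain.isConnected.isPreconnected hne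
  obtain ⟨τ, hsource, htarget, hmiddle⟩ := hψ.exists_rat_mapsTo
  exact ⟨τ, (a, b, ψ), ⟨ha, hb, hsource, htarget,
    hψ.exists_isBoundaryArc hab.lt hab.continuousOn hab.injOn fun t => hab.notMem⟩, hmiddle⟩

lemma IsBoundaryArc.closure_subset_of_mem_crosscutFamily (h : IsBoundaryArc Ω γ t₁ t₂)
    {u' v' τ : ℝ} {q q' : ℂ} (hu : t₁ < u) (hv : v' < t₂)
    (hq : ∀ a ∈ nearestParams γ u v q, IsAccessibleFrom Ω (γ a) q)
    (hq' : ∀ b ∈ nearestParams γ u' v' q', IsAccessibleFrom Ω (γ b) q') {ψ : C(ℝ, ℂ)}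
    (hx : (a, b, ψ) ∈ crosscutFamily γ u v q u' v' q' τ) (hψ : MapsTo ψ (Icc τ (1 - τ)) Ω)
    (hW : IsBoundaryArc W γ a b) (hfr : frontier W = γ '' Icc a b ∪ ψ '' Icc 0 1) :
    W ⊆ Ω ∧ closure W ⊆ Ω ∪ γ '' Ioo t₁ t₂ := by
  obtain ⟨ha, hb, hsource, htarget, -⟩ := hx
  refine h.closure_subset hW (hu.trans_le ha.1.1) (hb.1.2.trans_lt hv)
    (hfr ▸ union_subset subset_union_right ?_)
  refine (mapsTo_Icc_of_isAccessibleFrom (hq a ha) (hq' b hb) hsource htarget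
    hψ).image_subset.trans (union_subset_union_right Ω ?_)
  exact insert_subset (mem_image_of_mem γ (left_mem_Icc.2 hW.lt.le))
    (singleton_subset_iff.2 (mem_image_of_mem γ (right_mem_Icc.2 hW.lt.le)))

lemma exists_countable_isBoundaryArc_family (γ : ℝ → ℂ) (t₀ : ℝ) :
    ∃ (ι : Type) (_ : Countable ι) (W : ι → Set ℂ) (a b : ι → ℝ),
      (∀ i, IsBoundaryArc (W i) γ (a i) (b i)) ∧
      ∀ Ω t₁ t₂, IsBoundaryArc Ω γ t₁ t₂ → t₀ ∈ Ioo t₁ t₂ →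
        ∃ i, t₀ ∈ Ioo (a i) (b i) ∧ Icc (a i) (b i) ⊆ Ioo t₁ t₂ ∧ W i ⊆ Ω ∧
          closure (W i) ⊆ Ω ∪ γ '' Ioo t₁ t₂ := by
  obtain ⟨Q, hQ, hQd⟩ := TopologicalSpace.exists_countable_dense ℂ
  have := hQ.to_subtype
  let Fam : (ℚ × ℚ × Q) × (ℚ × ℚ × Q) × ℚ → Set (ℝ × ℝ × C(ℝ, ℂ)) := fun κ =>
    crosscutFamily γ κ.1.1 κ.1.2.1 κ.1.2.2 κ.2.1.1 κ.2.1.2.1 κ.2.1.2.2 κ.2.2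
  choose D hDFam hD hFamD using fun κ =>
    (TopologicalSpace.IsSeparable.of_separableSpace (Fam κ)).exists_countable_dense_subset
  have hW : ∀ x : ↥(⋃ κ, D κ), ∃ W, IsBoundaryArc W γ x.1.1 x.1.2.1 ∧
      frontier W = γ '' Icc x.1.1 x.1.2.1 ∪ x.1.2.2 '' Icc 0 1 := fun ⟨x, hx⟩ => by
    obtain ⟨κ, hκ⟩ := mem_iUnion.1 hx
    exact (hDFam κ hκ).2.2.2.2
  choose W hW hWfr using hW
  refine ⟨↥(⋃ κ, D κ), (countable_iUnion hD).to_subtype, W, fun x => x.1.1, fun x => x.1.2.1, hW,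
    fun Ω t₁ t₂ hΩ ht₀ => ?_⟩
  obtain ⟨u, v, hu, huv, hv, q, hqQ, hq⟩ :=
    (hΩ.mono ht₀.1 le_rfl ht₀.2.le).exists_rat_isAccessibleFrom hQd
  obtain ⟨u', v', hu', huv', hv', q', hqQ', hq'⟩ :=
    (hΩ.mono ht₀.2 ht₀.1.le le_rfl).exists_rat_isAccessibleFrom hQd
  obtain ⟨τ, x, hx, hxΩ⟩ := hΩ.exists_mem_crosscutFamily hu.le huv.le (hv.trans hu') huv'.le hv'.le
    hq hq'
  have hopen : IsOpen {x : ℝ × ℝ × C(ℝ, ℂ) | MapsTo x.2.2 (Icc (τ : ℝ) (1 - τ)) Ω} :=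
    (ContinuousMap.isOpen_setOfPred_mapsTo isCompact_Icc hΩ.isJordanDomain.isOpen).preimage
      (continuous_snd.comp continuous_snd)
  obtain ⟨y, hyΩ, hyD⟩ := mem_closure_iff.1
    (hFamD ((u, v, ⟨q, hqQ⟩), (u', v', ⟨q', hqQ'⟩), τ) hx) _ hopen hxΩ
  have hyFam := hDFam _ hyD
  let i : ↥(⋃ κ, D κ) := ⟨y, mem_iUnion.2 ⟨_, hyD⟩⟩
  exact ⟨i, ⟨hyFam.1.1.2.trans_lt hv, hu'.trans_le hyFam.2.1.1.1⟩,
    Icc_subset_Ioo (hu.trans_le hyFam.1.1.1) (hyFam.2.1.1.2.trans_lt hv'),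
    hΩ.closure_subset_of_mem_crosscutFamily hu hv' hq hq' hyFam hyΩ (hW i) (hWfr i)⟩

end CountableFamily

section TwoConstants

open Filter Topology

lemma norm_le_mul_norm_sub_pow_of_frontier {V : Set ℂ} (hV : Bornology.IsBounded V) {c : ℂ}
    (hc : c ∉ closure V) {G : ℂ → ℂ} (hG : DiffContOnCl ℂ G V) {C : ℝ} {n : ℕ}
    (hfr : ∀ w ∈ frontier V, ‖G w‖ ≤ C * ‖w - c‖ ^ n) {z : ℂ} (hz : z ∈ closure V) :
    ‖G z‖ ≤ C * ‖z - c‖ ^ n := by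
  have hne : ∀ w ∈ closure V, w - c ≠ 0 := fun w hw h => hc (sub_eq_zero.1 h ▸ hw)
  have hpos : ∀ w ∈ closure V, 0 < ‖w - c‖ ^ n := fun w hw =>
    pow_pos (norm_pos_iff.2 (hne w hw)) n
  have hquot : DiffContOnCl ℂ (fun w => G w / (w - c) ^ n) V :=
    ⟨hG.differentiableOn.div (by fun_prop) fun w hw => pow_ne_zero n (hne w (subset_closure hw)),
      hG.continuousOn.div (by fun_prop) fun w hw => pow_ne_zero n (hne w hw)⟩
  have hmax := Complex.norm_le_of_forall_mem_frontier_norm_le hV hquot (C := C)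
    (fun w hw => by
      rw [norm_div, norm_pow, div_le_iff₀ (hpos w (frontier_subset_closure hw))]
      exact hfr w hw) hz
  rwa [norm_div, norm_pow, div_le_iff₀ (hpos z hz)] at hmax

lemma exists_pos_forall_norm_le_of_frontier {V : Set ℂ} (hV : Bornology.IsBounded V) {c : ℂ}
    (hc : c ∉ closure V) {s S ε : ℝ} (M : ℝ) (hs : 0 < s) (hsS : s < S) (hε : 0 < ε) :
    ∃ δ > 0, ∀ G : ℂ → ℂ, DiffContOnCl ℂ G V →
      (∀ z ∈ frontier V, ‖G z‖ ≤ δ ∨ ‖G z‖ ≤ M ∧ S ≤ ‖z - c‖) →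
      ∀ z ∈ closure V, ‖z - c‖ ≤ s → ‖G z‖ ≤ ε := by
  have hS : 0 < S := hs.trans hsS
  obtain ⟨d, hd, hball⟩ := Metric.isOpen_iff.1 isClosed_closure.isOpen_compl c hc
  have hdist : ∀ z ∈ closure V, d ≤ ‖z - c‖ := fun z hz =>
    not_lt.1 fun h => hball (mem_ball_iff_norm.2 h) hz
  obtain ⟨n, hn⟩ : ∃ n : ℕ, M * (s / S) ^ n ≤ ε := by
    have hlim := (tendsto_pow_atTop_nhds_zero_of_lt_one (by positivity)
      ((div_lt_one hS).2 hsS)).const_mul M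
    rw [mul_zero] at hlim
    exact (hlim.eventually_le_const hε).exists
  refine ⟨ε * (d / s) ^ n, by positivity, fun G hG hfr z hz hzs => ?_⟩
  have hbound : ∀ w ∈ frontier V, ‖G w‖ ≤ ε / s ^ n * ‖w - c‖ ^ n := fun w hw => by
    rcases hfr w hw with hδ | ⟨hM, hSw⟩
    · calc ‖G w‖ ≤ ε / s ^ n * d ^ n := hδ.trans_eq (by rw [div_pow]; ring)
        _ ≤ ε / s ^ n * ‖w - c‖ ^ n := by gcongr; exact hdist w (frontier_subset_closure hw)
    · calc ‖G w‖ ≤ M * (s / S) ^ n / s ^ n * S ^ n := hM.trans_eq (by rw [div_pow]; field_simp)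
        _ ≤ ε / s ^ n * ‖w - c‖ ^ n := by gcongr
  calc ‖G z‖ ≤ ε / s ^ n * ‖z - c‖ ^ n := norm_le_mul_norm_sub_pow_of_frontier hV hc hG hbound hz
    _ ≤ ε / s ^ n * s ^ n := by gcongr
    _ = ε := div_mul_cancel₀ ε (by positivity)

/-- `G` is holomorphic on `W`, bounded there by `M`, and continuous on `W ∪ S`, where `S` is
typically a part of the boundary of `W`. -/
structure IsBoundedHolOn (W S : Set ℂ) (M : ℝ) (G : ℂ → ℂ) : Prop where
  continuousOn : ContinuousOn G (W ∪ S)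
  differentiableOn : DifferentiableOn ℂ G W
  norm_le : ∀ z ∈ W, ‖G z‖ ≤ M

/-- A qualitative two-constants estimate: among the holomorphic functions on `W` with a given bound
`M` and continuous on `W ∪ S`, those that are small on `S` are uniformly small on `U`. -/
def IsControlled (W S U : Set ℂ) : Prop :=
  ∀ M ε : ℝ, 0 < ε → ∃ δ > 0, ∀ G, IsBoundedHolOn W S M G → (∀ w ∈ S, ‖G w‖ ≤ δ) →
    ∀ w ∈ U, ‖G w‖ ≤ ε

variable {W S U : Set ℂ} {M M' : ℝ} {F G : ℂ → ℂ}

lemma IsBoundedHolOn.mono {S' : Set ℂ} (hG : IsBoundedHolOn W S M G) (hS : S' ⊆ S) :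
    IsBoundedHolOn W S' M G where
  continuousOn := hG.continuousOn.mono (union_subset_union_right W hS)
  differentiableOn := hG.differentiableOn
  norm_le := hG.norm_le

lemma IsBoundedHolOn.sub (hF : IsBoundedHolOn W S M F) (hG : IsBoundedHolOn W S M' G) :
    IsBoundedHolOn W S (M + M') (fun z => F z - G z) where
  continuousOn := hF.continuousOn.sub hG.continuousOn
  differentiableOn := hF.differentiableOn.sub hG.differentiableOn
  norm_le z hz := (norm_sub_le _ _).trans (add_le_add (hF.norm_le z hz) (hG.norm_le z hz))

lemma IsControlled.mono {U' : Set ℂ} (h : IsControlled W S U) (hU : U' ⊆ U) :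
    IsControlled W S U' := fun M ε hε => by
  obtain ⟨δ, hδ, hG⟩ := h M ε hε
  exact ⟨δ, hδ, fun G hGM hGδ w hw => hG G hGM hGδ w (hU hw)⟩

lemma IsControlled.union {U' : Set ℂ} (h : IsControlled W S U) (h' : IsControlled W S U') :
    IsControlled W S (U ∪ U') := fun M ε hε => by
  obtain ⟨δ, hδ, hG⟩ := h M ε hε
  obtain ⟨δ', hδ', hG'⟩ := h' M ε hε
  refine ⟨min δ δ', lt_min hδ hδ', fun G hGM hGδ w hw => hw.elim ?_ ?_⟩
  · exact hG G hGM (fun z hz => (hGδ z hz).trans (min_le_left _ _)) w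
  · exact hG' G hGM (fun z hz => (hGδ z hz).trans (min_le_right _ _)) w

lemma isControlled_self (W S : Set ℂ) : IsControlled W S S := fun _ ε hε =>
  ⟨ε, hε, fun _ _ h => h⟩

lemma IsControlled.enlarge_closedBall {y : ℂ} {r s R : ℝ} (h : IsControlled W S (closedBall y r))
    (hr : 0 < r) (hsR : s < R) (hR : closedBall y R ⊆ W) : IsControlled W S (closedBall y s) := by
  rcases le_or_gt s r with hsr | hrs
  · exact h.mono (closedBall_subset_closedBall hsr)
  intro M ε hε
  let V := ball y R \ closedBall y r
  have hVopen : IsOpen V := isOpen_ball.sdiff isClosed_closedBall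
  have hVcl : closure V ⊆ closedBall y R ∩ (ball y r)ᶜ := by
    refine closure_minimal (fun x hx => ⟨ball_subset_closedBall hx.1, fun hxr =>
      hx.2 (ball_subset_closedBall hxr)⟩) (isClosed_closedBall.inter isOpen_ball.isClosed_compl)
  obtain ⟨δ', hδ', hV⟩ := exists_pos_forall_norm_le_of_frontier
    (isBounded_ball.subset sdiff_subset : Bornology.IsBounded V)
    (fun hy => (hVcl hy).2 (mem_ball_self hr)) M (hr.trans hrs) hsR hε
  obtain ⟨δ, hδ, hball⟩ := h M (min δ' ε) (lt_min hδ' hε)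
  refine ⟨δ, hδ, fun G hG hGδ w hw => ?_⟩
  have hsmall := hball G hG hGδ
  by_cases hwr : w ∈ closedBall y r
  · exact (hsmall w hwr).trans (min_le_right _ _)
  have hclW : closure V ⊆ W := hVcl.trans (inter_subset_left.trans hR)
  refine hV G ⟨hG.differentiableOn.mono (subset_closure.trans hclW),
    hG.continuousOn.mono (hclW.trans subset_union_left)⟩ (fun z hz => ?_) w
    (subset_closure ⟨closedBall_subset_ball hsR hw, hwr⟩) (mem_closedBall_iff_norm.1 hw)
  have hzV : z ∉ V := disjoint_left.1 (disjoint_frontier_iff_isOpen.2 hVopen) hz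
  by_cases hzr : z ∈ closedBall y r
  · exact .inl ((hsmall z hzr).trans (min_le_left _ _))
  · refine .inr ⟨hG.norm_le z (hclW (frontier_subset_closure hz)), not_lt.1 fun hzR => ?_⟩
    exact hzV ⟨mem_ball_iff_norm.2 hzR, hzr⟩

lemma exists_isControlled_of_dist_lt {x y : ℂ} {R : ℝ} (hR : closedBall x R ⊆ W)
    (hx : ∃ U ∈ 𝓝 x, IsControlled W S U) (hxy : dist y x < R) :
    ∃ U ∈ 𝓝 y, IsControlled W S U := by
  obtain ⟨U, hU, hUc⟩ := hx
  obtain ⟨r, hr, hrU⟩ := Metric.nhds_basis_closedBall.mem_iff.1 hU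
  obtain ⟨s, hys, hsR⟩ := exists_between hxy
  exact ⟨closedBall x s, mem_of_superset (isOpen_ball.mem_nhds hys) ball_subset_closedBall,
    (hUc.mono hrU).enlarge_closedBall hr hsR hR⟩

lemma exists_isControlled_of_isPreconnected (hW : IsOpen W) (hWc : IsPreconnected W) {x y : ℂ}
    (hxW : x ∈ W) (hyW : y ∈ W) (hx : ∃ U ∈ 𝓝 x, IsControlled W S U) :
    ∃ U ∈ 𝓝 y, IsControlled W S U := by
  let P (x y : ℂ) : Prop :=
    (∃ U ∈ 𝓝 x, IsControlled W S U) → ∃ U ∈ 𝓝 y, IsControlled W S U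
  refine hWc.induction₂' P (fun x hx => ?_) (fun _ _ _ _ _ _ h₁ h₂ h => h₂ (h₁ h)) hxW hyW hx
  obtain ⟨R, hR, hRW⟩ := Metric.nhds_basis_closedBall.mem_iff.1 (hW.mem_nhds hx)
  filter_upwards [mem_nhdsWithin_of_mem_nhds (ball_mem_nhds x (half_pos hR))] with y hy
  have hyx : dist y x < R / 2 := hy
  refine ⟨fun h => exists_isControlled_of_dist_lt hRW h (by linarith), fun h => ?_⟩
  exact exists_isControlled_of_dist_lt
    ((closedBall_subset_closedBall' (by linarith : R / 2 + dist y x ≤ R)).trans hRW) h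
    (by rwa [dist_comm])

end TwoConstants

section BoundedExtensions

open Filter Topology

variable {W : Set ℂ} {γ : ℝ → ℂ} {a b m M : ℝ} {F G : ℂ → ℂ}

lemma IsJordanDomain.exists_dist_lt_notMem_closure (hW : IsJordanDomain W) {p : ℂ} (hp : p ∉ W)
    {ε : ℝ} (hε : 0 < ε) : ∃ c ∉ closure W, dist p c < ε := by
  rw [← hW.interior_closure_eq, interior_eq_compl_closure_compl, notMem_compl_iff] at hp
  exact Metric.mem_closure_iff.1 hp ε hε

lemma IsBoundaryArc.exists_isControlled_of_mem_Ioo (h : IsBoundaryArc W γ a b)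
    (hm : m ∈ Ioo a b) : ∃ U ∈ 𝓝[W] (γ m), IsControlled W (γ '' Ioo a b) U := by
  obtain ⟨ρ, hρ, harc⟩ := mem_nhdsWithin_iff.1
    (h.isJordanDomain.isJordanCurve_frontier.image_Ioo_mem_nhdsWithin h.continuousOn h.injOn
      h.mapsTo_frontier hm)
  obtain ⟨R, hR, hRρ⟩ := exists_between hρ
  obtain ⟨c, hcW, hc⟩ := h.isJordanDomain.exists_dist_lt_notMem_closure
    (h.notMem (Ioo_subset_Icc_self hm)) (by positivity : 0 < R / 4)
  let V := W ∩ ball (γ m) R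
  have hVopen : IsOpen V := h.isJordanDomain.isOpen.inter isOpen_ball
  have hVcl : closure V ⊆ W ∪ γ '' Ioo a b := fun z hz => by
    have hzW := closure_mono inter_subset_left hz
    rw [closure_eq_self_union_frontier] at hzW
    exact hzW.imp_right fun hzfr => harc ⟨closedBall_subset_ball hRρ
      (closure_ball_subset_closedBall (closure_mono inter_subset_right hz)), hzfr⟩
  refine ⟨W ∩ ball (γ m) (R / 4), inter_mem self_mem_nhdsWithin
    (mem_nhdsWithin_of_mem_nhds (ball_mem_nhds _ (by positivity))), fun M ε hε => ?_⟩
  obtain ⟨δ, hδ, hV⟩ := exists_pos_forall_norm_le_of_frontier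
    (isBounded_ball.subset inter_subset_right : Bornology.IsBounded V)
    (fun hcV => hcW (closure_mono inter_subset_left hcV)) M (by positivity : 0 < R / 2)
    (by linarith : R / 2 < 3 * R / 4) hε
  refine ⟨δ, hδ, fun G hG hGδ w hw => hV G ⟨hG.differentiableOn.mono inter_subset_left,
    hG.continuousOn.mono hVcl⟩ (fun z hz => ?_) w
    (subset_closure ⟨hw.1, ball_subset_ball (by linarith) hw.2⟩) ?_⟩
  · refine (hVcl (frontier_subset_closure hz)).symm.imp (hGδ z) fun hzW => ⟨hG.norm_le z hzW, ?_⟩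
    have hzR : R ≤ dist z (γ m) := not_lt.1 fun hzR =>
      disjoint_left.1 (disjoint_frontier_iff_isOpen.2 hVopen) hz ⟨hzW, hzR⟩
    rw [← dist_eq_norm]
    linarith [dist_triangle_right z (γ m) c]
  · rw [← dist_eq_norm]
    linarith [dist_triangle w (γ m) c, mem_ball.1 hw.2]

lemma IsBoundaryArc.mem_closure (h : IsBoundaryArc W γ a b) {t : ℝ} (ht : t ∈ Ioo a b) :
    γ t ∈ closure W :=
  frontier_subset_closure (h.mapsTo_frontier (Ioo_subset_Icc_self ht))

lemma IsBoundaryArc.exists_isControlled (h : IsBoundaryArc W γ a b) {z : ℂ}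
    (hz : z ∈ W ∪ γ '' Ioo a b) : ∃ U ∈ 𝓝[W] z, IsControlled W (γ '' Ioo a b) U := by
  have hWo := h.isJordanDomain.isOpen
  rcases hz with hzW | ⟨t, ht, rfl⟩
  · obtain ⟨m, hm⟩ := nonempty_Ioo.2 h.lt
    obtain ⟨U, hU, hUc⟩ := h.exists_isControlled_of_mem_Ioo hm
    have := mem_closure_iff_nhdsWithin_neBot.1 (h.mem_closure hm)
    obtain ⟨q, hqU, hqW⟩ :=
      ((eventually_eventually_nhdsWithin.2 hU).and self_mem_nhdsWithin).exists
    rw [hWo.nhdsWithin_eq hzW]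
    exact exists_isControlled_of_isPreconnected hWo
      h.isJordanDomain.isConnected.isPreconnected hqW hzW ⟨U, hWo.nhdsWithin_eq hqW ▸ hqU, hUc⟩
  · exact h.exists_isControlled_of_mem_Ioo ht

lemma IsBoundaryArc.eq_zero_of_eventually_eq_zero (h : IsBoundaryArc W γ a b)
    (hG : IsBoundedHolOn W (γ '' Ioo a b) M G) (hm : m ∈ Ioo a b)
    (hzero : ∀ᶠ t in 𝓝 m, G (γ t) = 0) : ∀ t ∈ Ioo a b, G (γ t) = 0 := by
  obtain ⟨c, d, hmcd, hcd⟩ := mem_nhds_iff_exists_Ioo_subset.1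
    (hzero.and (Ioo_mem_nhds hm.1 hm.2))
  have hcdlt := hmcd.1.trans hmcd.2
  have hsub : Ioo c d ⊆ Ioo a b := fun t ht => (hcd ht).2
  have harc := h.mono hcdlt ((Ioo_subset_Ioo_iff hcdlt).1 hsub).1
    ((Ioo_subset_Ioo_iff hcdlt).1 hsub).2
  have hW : EqOn G 0 W := fun z hz => by
    obtain ⟨U, hU, hUc⟩ := harc.exists_isControlled (.inl hz)
    refine norm_le_zero_iff.1 (le_of_forall_pos_le_add fun ε hε => ?_)
    obtain ⟨δ, hδ, hsmall⟩ := hUc M ε hε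
    rw [zero_add]
    refine hsmall G (hG.mono (image_mono hsub)) ?_ z (mem_of_mem_nhdsWithin hz hU)
    rintro _ ⟨t, ht, rfl⟩
    rw [(hcd ht).1, norm_zero]
    exact hδ.le
  have hcl : W ∪ γ '' Ioo a b ⊆ closure W :=
    union_subset subset_closure (image_subset_iff.2 fun t => h.mem_closure)
  exact fun t ht => hW.of_subset_closure hG.continuousOn continuousOn_const subset_union_left hcl
    (.inr (mem_image_of_mem γ ht))

lemma exists_tendstoLocallyUniformlyOn_of_uniformCauchySeqOn {ι X E : Type*} [TopologicalSpace X]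
    [UniformSpace E] [CompleteSpace E] [Nonempty E] {p : Filter ι} [p.NeBot] {G : ι → X → E}
    {s : Set X} (h : ∀ x ∈ s, ∃ U ∈ 𝓝[s] x, UniformCauchySeqOn G p U) :
    ∃ F, TendstoLocallyUniformlyOn G F p s := by
  have hlim : ∀ x, ∃ l, x ∈ s → Tendsto (fun i => G i x) p (𝓝 l) := fun x => by
    by_cases hx : x ∈ s
    · obtain ⟨U, hU, hG⟩ := h x hx
      obtain ⟨l, hl⟩ := CompleteSpace.complete (hG.cauchy_map (mem_of_mem_nhdsWithin hx hU))
      exact ⟨l, fun _ => hl⟩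
    · exact ⟨Classical.arbitrary E, fun hx' => absurd hx' hx⟩
  choose F hF using hlim
  refine ⟨F, fun u hu x hx => ?_⟩
  obtain ⟨U, hU, hG⟩ := h x hx
  exact ⟨U ∩ s, inter_mem hU self_mem_nhdsWithin,
    (hG.mono inter_subset_left).tendstoUniformlyOn_of_tendsto (fun y hy => hF y hy.2) u hu⟩

lemma IsControlled.uniformCauchySeqOn {S U : Set ℂ} {ι : Type*} {p : Filter ι} {G : ι → ℂ → ℂ}
    (h : IsControlled W S U) (hG : ∀ᶠ i in p, IsBoundedHolOn W S M (G i))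
    (hS : UniformCauchySeqOn G p S) : UniformCauchySeqOn G p U := fun u hu => by
  obtain ⟨ε, hε, hεu⟩ := Metric.mem_uniformity_dist.1 hu
  obtain ⟨δ, hδ, hsmall⟩ := h (M + M) (ε / 2) (half_pos hε)
  filter_upwards [hS _ (Metric.dist_mem_uniformity hδ), hG.prod_mk hG] with i hi hGi w hw
  refine hεu ((dist_eq_norm _ _).trans_lt ((hsmall _ (hGi.1.sub hGi.2) (fun z hz => ?_) w
    hw).trans_lt (half_lt_self hε)))
  rw [← dist_eq_norm]
  exact (hi z hz).le

/-- `f` extends from `S` to a holomorphic function on `W` bounded by `M`. -/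
def HasBoundedHolExt (W S : Set ℂ) (M : ℝ) (f : ℂ → ℂ) : Prop :=
  ∃ F, IsBoundedHolOn W S M F ∧ EqOn F f S

lemma IsBoundaryArc.hasBoundedHolExt_of_tendsto (h : IsBoundaryArc W γ a b) {ι : Type*}
    {p : Filter ι} [p.NeBot] {g : ι → ℂ → ℂ} {f : ℂ → ℂ}
    (hg : ∀ᶠ i in p, HasBoundedHolExt W (γ '' Ioo a b) M (g i))
    (hgf : TendstoUniformlyOn g f p (γ '' Ioo a b)) : HasBoundedHolExt W (γ '' Ioo a b) M f := by
  choose! G hG hGg using fun i (hi : HasBoundedHolExt W (γ '' Ioo a b) M (g i)) => hi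
  have hGbdd := hg.mono hG
  have hGf : TendstoUniformlyOn G f p (γ '' Ioo a b) :=
    hgf.congr (hg.mono fun i hi => (hGg i hi).symm)
  obtain ⟨F, hF⟩ : ∃ F, TendstoLocallyUniformlyOn G F p (W ∪ γ '' Ioo a b) := by
    refine exists_tendstoLocallyUniformlyOn_of_uniformCauchySeqOn fun z hz => ?_
    obtain ⟨U, hU, hUc⟩ := h.exists_isControlled hz
    refine ⟨U ∪ γ '' Ioo a b, ?_, (hUc.union (isControlled_self _ _)).uniformCauchySeqOn hGbdd
      hGf.uniformCauchySeqOn⟩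
    rw [nhdsWithin_union]
    exact ⟨mem_of_superset hU subset_union_left,
      mem_of_superset self_mem_nhdsWithin subset_union_right⟩
  refine ⟨F, ⟨hF.continuousOn (hGbdd.mono fun i hi => hi.continuousOn).frequently,
    (hF.mono subset_union_left).differentiableOn (hGbdd.mono fun i hi => hi.differentiableOn)
      h.isJordanDomain.isOpen, fun z hz => ?_⟩, fun z hz => ?_⟩
  · exact le_of_tendsto (hF.tendsto_at (.inl hz)).norm (hGbdd.mono fun i hi => hi.norm_le z hz)
  · exact tendsto_nhds_unique (hF.tendsto_at (.inr hz)) (hGf.tendsto_at hz)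

end BoundedExtensions

section OscillatingFunction

open Filter Topology

lemma exists_mem_Ioo_sin_inv_eq {ε : ℝ} (hε : 0 < ε) (x : ℝ) :
    ∃ r ∈ Ioo 0 ε, Real.sin r⁻¹ = Real.sin x := by
  obtain ⟨y, hy, hxy⟩ := Real.sin_periodic.exists_mem_Ioc Real.two_pi_pos x ε⁻¹
  have hy₀ : 0 < y := (inv_pos.2 hε).trans hy.1
  exact ⟨y⁻¹, ⟨inv_pos.2 hy₀, inv_lt_of_inv_lt₀ hε hy.1⟩, by rw [inv_inv, hxy]⟩

variable {E : Type*} [NormedAddCommGroup E]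

lemma exists_mem_Ioo_sin_inv_norm_sub_eq {γ : ℝ → E} {t₀ b : ℝ} (hb : t₀ < b)
    (hγ : ContinuousOn γ (Icc t₀ b)) (hne : γ b ≠ γ t₀) (x : ℝ) :
    ∃ t ∈ Ioo t₀ b, γ t ≠ γ t₀ ∧ Real.sin ‖γ t - γ t₀‖⁻¹ = Real.sin x := by
  obtain ⟨r, hr, hsin⟩ := exists_mem_Ioo_sin_inv_eq (norm_pos_iff.2 (sub_ne_zero.2 hne)) x
  have hcont : ContinuousOn (fun t => ‖γ t - γ t₀‖) (Icc t₀ b) := by fun_prop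
  obtain ⟨t, ht, hrt⟩ := intermediate_value_Ioo hb.le hcont
    (by simpa only [sub_self, norm_zero] using hr)
  have hrt' : ‖γ t - γ t₀‖ = r := hrt
  exact ⟨t, ht, sub_ne_zero.1 (norm_pos_iff.1 (hrt' ▸ hr.1)), hrt' ▸ hsin⟩

lemma exists_contDiff_ne_zero_iff_sin_inv_norm_sub_pos [NormedSpace ℝ E] [FiniteDimensional ℝ E]
    (k : ℕ∞) (c : E) :
    ∃ f : E → ℝ, ContDiff ℝ k f ∧ ∀ z ≠ c, (f z ≠ 0 ↔ 0 < Real.sin ‖z - c‖⁻¹) := by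
  have hcont : ContinuousOn (fun z => Real.sin ‖z - c‖⁻¹) {c}ᶜ :=
    Real.continuous_sin.comp_continuousOn
      (ContinuousOn.inv₀ (by fun_prop) fun z hz => norm_ne_zero_iff.2 (sub_ne_zero.2 hz))
  have hopen : IsOpen ({c}ᶜ ∩ (fun z => Real.sin ‖z - c‖⁻¹) ⁻¹' Ioi 0) :=
    hcont.isOpen_inter_preimage isOpen_compl_singleton isOpen_Ioi
  obtain ⟨f, hsupp, hf, -⟩ := hopen.exists_contDiff_support_eq (n := k)
  refine ⟨f, hf, fun z hz => ?_⟩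
  rw [← Function.mem_support, hsupp]
  exact and_iff_right hz

lemma exists_contDiff_vanishing_on_subarcs [NormedSpace ℝ E] [FiniteDimensional ℝ E] (k : ℕ∞)
    (c : E) : ∃ f : E → ℝ, ContDiff ℝ k f ∧ ∀ (γ : ℝ → E) (t₀ b : ℝ), t₀ < b →
      ContinuousOn γ (Icc t₀ b) → γ t₀ = c → γ b ≠ c →
      (∃ m ∈ Ioo t₀ b, ∀ᶠ t in 𝓝 m, f (γ t) = 0) ∧ ∃ t ∈ Ioo t₀ b, f (γ t) ≠ 0 := by
  obtain ⟨f, hf, hsin⟩ := exists_contDiff_ne_zero_iff_sin_inv_norm_sub_pos k c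
  refine ⟨f, hf, fun γ t₀ b hb hγ ht₀ hγb => ?_⟩
  subst ht₀
  obtain ⟨m, hm, hmne, hmsin⟩ := exists_mem_Ioo_sin_inv_norm_sub_eq hb hγ hγb (-(Real.pi / 2))
  obtain ⟨t, ht, htne, htsin⟩ := exists_mem_Ioo_sin_inv_norm_sub_eq hb hγ hγb (Real.pi / 2)
  rw [Real.sin_neg, Real.sin_pi_div_two] at hmsin
  rw [Real.sin_pi_div_two] at htsin
  refine ⟨⟨m, hm, ?_⟩, t, ht, (hsin (γ t) htne).2 (htsin ▸ one_pos)⟩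
  have hγm : ContinuousAt γ m := hγ.continuousAt (Icc_mem_nhds hm.1 hm.2)
  have hcont : ContinuousAt (fun t => Real.sin ‖γ t - γ t₀‖⁻¹) m :=
    Real.continuous_sin.continuousAt.comp
      ((hγm.sub continuousAt_const).norm.inv₀ (norm_ne_zero_iff.2 (sub_ne_zero.2 hmne)))
  filter_upwards [hγm.eventually_ne hmne, hcont.eventually_lt_const (by linarith :
    Real.sin ‖γ m - γ t₀‖⁻¹ < 0)] with s hs hneg
  exact not_not.1 fun hfs => ((hsin (γ s) hs).1 hfs).not_gt hneg

end OscillatingFunction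

section CkGamma

open Filter Topology

variable {k : ℕ∞} {I : Set ℝ} {γ : ℝ → ℂ} {ι : Type*} {p : Filter ι} {W : Set ℂ} {a b t₀ : ℝ}

noncomputable instance CkGamma.instTopologicalSpace : TopologicalSpace (CkGamma k I γ) :=
  ckTop k I γ

lemma CkGamma.tendsto_nhds_iff {g : ι → CkGamma k I γ} {f : CkGamma k I γ} :
    Tendsto g p (𝓝 f) ↔ ∀ j : ℕ, (j : ℕ∞) ≤ k → ∀ K ⊆ I, IsCompact K →
      TendstoUniformlyOn (fun i => iteratedDerivWithin j (fun s => (g i).1 (γ s)) I)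
        (iteratedDerivWithin j (fun s => f.1 (γ s)) I) p K := by
  refine (Topology.IsInducing.mk rfl).tendsto_nhds_iff.trans (tendsto_pi_nhds.trans
    (forall_congr' fun j => UniformOnFun.tendsto_iff_tendstoUniformlyOn.trans ?_))
  by_cases hj : (j : ℕ∞) ≤ k
  · refine ⟨fun h _ K hKI hK u hu => ?_, fun h K hK u hu => ?_⟩
    · have hK' : IsCompact (Subtype.val ⁻¹' K : Set I) := by
        rwa [Subtype.isCompact_iff, Subtype.image_preimage_coe, inter_eq_right.2 hKI]
      filter_upwards [h _ hK' u hu] with i hi t ht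
      simpa [hj] using hi ⟨t, hKI ht⟩ ht
    · filter_upwards [h hj _ (Subtype.coe_image_subset I K) (Subtype.isCompact_iff.1 hK) u hu]
        with i hi t ht
      simpa [hj] using hi t (mem_image_of_mem _ ht)
  · refine iff_of_true (fun _ _ u hu => .of_forall fun _ _ _ => ?_) fun h => absurd h hj
    simpa [hj] using refl_mem_uniformity hu

lemma CkGamma.tendstoUniformlyOn {g : ι → CkGamma k I γ} {f : CkGamma k I γ}
    (hg : Tendsto g p (𝓝 f)) {K : Set ℝ} (hK : IsCompact K) (hKI : K ⊆ I) :
    TendstoUniformlyOn (fun i => (g i).1) f.1 p (γ '' K) := by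
  have h := CkGamma.tendsto_nhds_iff.1 hg 0 bot_le K hKI hK
  simp only [iteratedDerivWithin_zero] at h
  exact fun u hu => (h u hu).mono fun i hi => forall_mem_image.2 hi

lemma IsBoundaryArc.isClosed_setOfPred_hasBoundedHolExt (h : IsBoundaryArc W γ a b)
    (hI : Icc a b ⊆ I) (M : ℝ) :
    IsClosed {f : CkGamma k I γ | HasBoundedHolExt W (γ '' Ioo a b) M f.1} := by
  refine isClosed_of_closure_subset fun f hf => ?_
  have := mem_closure_iff_nhdsWithin_neBot.1 hf
  exact h.hasBoundedHolExt_of_tendsto (g := fun g : CkGamma k I γ => g.1) self_mem_nhdsWithin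
    ((CkGamma.tendstoUniformlyOn (tendsto_id.mono_left nhdsWithin_le_nhds) isCompact_Icc
      hI).mono (image_mono Ioo_subset_Icc_self))

/-- The element `f + x • g` of `C^k(γ)`. -/
noncomputable def CkGamma.addSMul (f g : CkGamma k I γ) (x : ℝ) : CkGamma k I γ :=
  ⟨fun z => f.1 z + x • g.1 z, f.2.add (g.2.const_smul x)⟩

lemma CkGamma.tendsto_addSMul (hI : UniqueDiffOn ℝ I) (f g : CkGamma k I γ) :
    Tendsto (f.addSMul g) (𝓝 0) (𝓝 f) := by
  refine CkGamma.tendsto_nhds_iff.2 fun j hj K hKI hK => ?_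
  have hjk : (j : WithTop ℕ∞) ≤ k := by exact_mod_cast hj
  have hderiv : ∀ x, ∀ t ∈ I, iteratedDerivWithin j (fun s => (f.addSMul g x).1 (γ s)) I t =
      iteratedDerivWithin j (fun s => f.1 (γ s)) I t +
        x • iteratedDerivWithin j (fun s => g.1 (γ s)) I t := fun x t ht => by
    have hf := (f.2 t ht).of_le hjk
    have hg := (g.2 t ht).of_le hjk
    rw [← iteratedDerivWithin_fun_const_smul ht hI x hg]
    exact iteratedDerivWithin_fun_add ht hI hf (hg.const_smul x)
  obtain ⟨C, hC⟩ := hK.exists_bound_of_continuousOn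
    ((g.2.continuousOn_iteratedDerivWithin hjk hI).mono hKI)
  have hlim : Tendsto (fun x : ℝ => |x| * C) (𝓝 0) (𝓝 0) := by
    have : Continuous fun x : ℝ => |x| * C := by fun_prop
    simpa only [abs_zero, zero_mul] using this.tendsto 0
  refine Metric.tendstoUniformlyOn_iff.2 fun ε hε => ?_
  filter_upwards [hlim.eventually_lt_const hε] with x hx t ht
  rw [hderiv x t (hKI ht), dist_self_add_right, norm_smul, Real.norm_eq_abs]
  exact (mul_le_mul_of_nonneg_left (hC t ht) (abs_nonneg x)).trans_lt hx

lemma IsBoundaryArc.subsingleton_setOfPred_hasBoundedHolExt (h : IsBoundaryArc W γ a b)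
    (f : ℂ → ℂ) {g : ℂ → ℂ} (hzero : ∃ m ∈ Ioo a b, ∀ᶠ t in 𝓝 m, g (γ t) = 0)
    (hne : ∃ t ∈ Ioo a b, g (γ t) ≠ 0) :
    {x : ℝ | ∃ M, HasBoundedHolExt W (γ '' Ioo a b) M (fun z => f z + x • g z)}.Subsingleton := by
  rintro x ⟨M, F, hF, hFf⟩ y ⟨M', F', hF', hFf'⟩
  obtain ⟨m, hm, hzero⟩ := hzero
  obtain ⟨t, ht, hne⟩ := hne
  have hsub : ∀ s ∈ Ioo a b, F (γ s) - F' (γ s) = (x - y) • g (γ s) := fun s hs => by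
    rw [hFf (mem_image_of_mem γ hs), hFf' (mem_image_of_mem γ hs), sub_smul]
    exact add_sub_add_left_eq_sub _ _ _
  have hvanish := h.eq_zero_of_eventually_eq_zero (hF.sub hF') hm (by
    filter_upwards [hzero, Ioo_mem_nhds hm.1 hm.2] with s hs hsab
    rw [hsub s hsab, hs, smul_zero]) t ht
  rw [hsub t ht, smul_eq_zero] at hvanish
  exact sub_eq_zero.1 (hvanish.resolve_right hne)

lemma OneSidedHolExtAt.exists_hasBoundedHolExt {f : ℂ → ℂ} (hf : OneSidedHolExtAt I γ f t₀)
    {W : ι → Set ℂ} {a b : ι → ℝ} (harc : ∀ i, IsBoundaryArc (W i) γ (a i) (b i))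
    (hfam : ∀ Ω c d, IsBoundaryArc Ω γ c d → t₀ ∈ Ioo c d → ∃ i, t₀ ∈ Ioo (a i) (b i) ∧
      Icc (a i) (b i) ⊆ Ioo c d ∧ W i ⊆ Ω ∧ closure (W i) ⊆ Ω ∪ γ '' Ioo c d)
    {V : Set ℝ} (hV : V ∈ 𝓝 t₀) (hγ : ContinuousOn γ V) (hinj : InjOn γ V) :
    ∃ i, t₀ ∈ Ioo (a i) (b i) ∧ Icc (a i) (b i) ⊆ V ∧
      ∃ M : ℕ, HasBoundedHolExt (W i) (γ '' Ioo (a i) (b i)) M f := by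
  obtain ⟨Ω, hΩ, t₁, -, t₂, -, h₁, h₂, hfr, F, hFc, hFd, hFf⟩ := hf
  obtain ⟨c, d, -, hcd, hsub⟩ :=
    exists_Icc_mem_subset_of_mem_nhds (inter_mem hV (Ioo_mem_nhds h₁ h₂))
  obtain ⟨hsubV, hsubt⟩ := subset_inter_iff.1 hsub
  have ht₀ : t₀ ∈ Ioo c d := Icc_mem_nhds_iff.1 hcd
  have hΩγ : IsBoundaryArc Ω γ c d := ⟨hΩ, ht₀.1.trans ht₀.2, hγ.mono hsubV, hinj.mono hsubV,
    fun t ht => hfr (mem_image_of_mem γ (Ioo_subset_Icc_self (hsubt ht)))⟩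
  obtain ⟨i, hi₀, hi, hWΩ, hWcl⟩ := hfam Ω c d hΩγ ht₀
  have hcdt : Ioo c d ⊆ Ioo t₁ t₂ := Ioo_subset_Icc_self.trans hsubt
  have hit : Ioo (a i) (b i) ⊆ Ioo t₁ t₂ := Ioo_subset_Icc_self.trans (hi.trans hcdt)
  have hcompact : IsCompact (closure (W i)) := (harc i).isJordanDomain.isBounded.isCompact_closure
  obtain ⟨C, hC⟩ := hcompact.exists_bound_of_continuousOn
    (hFc.mono (hWcl.trans (union_subset_union_right Ω (image_mono hcdt))))
  obtain ⟨M, hM⟩ := exists_nat_ge C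
  exact ⟨i, hi₀, hi.trans (Ioo_subset_Icc_self.trans hsubV), M, F,
    ⟨hFc.mono (union_subset_union hWΩ (image_mono hit)), hFd.mono hWΩ,
      fun z hz => (hC z (subset_closure hz)).trans hM⟩,
    forall_mem_image.2 fun t ht => hFf t (hit ht)⟩

lemma exists_countable_forall_oneSidedHolExtAt_iff (hγ : ContinuousOn γ I) (ht₀ : t₀ ∈ interior I)
    (hinj : ∃ U ∈ 𝓝 t₀, InjOn γ U) :
    ∃ (ι : Type) (_ : Countable ι) (W : ι → Set ℂ) (a b : ι → ℝ),
      (∀ i, IsBoundaryArc (W i) γ (a i) (b i) ∧ t₀ ∈ Ioo (a i) (b i) ∧ Icc (a i) (b i) ⊆ I) ∧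
      ∀ f, OneSidedHolExtAt I γ f t₀ ↔
        ∃ i, ∃ M : ℕ, HasBoundedHolExt (W i) (γ '' Ioo (a i) (b i)) M f := by
  obtain ⟨U, hU, hUinj⟩ := hinj
  obtain ⟨ι, hι, W, a, b, harc, hfam⟩ := exists_countable_isBoundaryArc_family γ t₀
  refine ⟨{i // t₀ ∈ Ioo (a i) (b i) ∧ Icc (a i) (b i) ⊆ I}, inferInstance, fun i => W i,
    fun i => a i, fun i => b i, fun i => ⟨harc i, i.2⟩, fun f => ⟨fun hf => ?_, ?_⟩⟩
  · obtain ⟨i, hi₀, hiV, hM⟩ := hf.exists_hasBoundedHolExt harc hfam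
      (inter_mem hU (mem_interior_iff_mem_nhds.1 ht₀)) (hγ.mono inter_subset_right)
      (hUinj.mono inter_subset_left)
    exact ⟨⟨i, hi₀, hiV.trans inter_subset_right⟩, hM⟩
  · rintro ⟨⟨i, hi₀, hiI⟩, M, F, hF, hFf⟩
    exact ⟨W i, (harc i).isJordanDomain, a i, hiI (left_mem_Icc.2 (harc i).lt.le), b i,
      hiI (right_mem_Icc.2 (harc i).lt.le), hi₀.1, hi₀.2, (harc i).mapsTo_frontier.image_subset, F,
      hF.continuousOn, hF.differentiableOn, fun t ht => hFf (mem_image_of_mem γ ht)⟩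

lemma isGδ_setOfPred_not_oneSidedHolExtAt (hγ : ContinuousOn γ I) (ht₀ : t₀ ∈ interior I)
    (hinj : ∃ U ∈ 𝓝 t₀, InjOn γ U) :
    IsGδ {f : CkGamma k I γ | ¬ OneSidedHolExtAt I γ f.1 t₀} := by
  obtain ⟨ι, _, W, a, b, harc, hiff⟩ := exists_countable_forall_oneSidedHolExtAt_iff hγ ht₀ hinj
  simp only [hiff, not_exists, ofPred_forall]
  exact IsGδ.iInter fun i => IsGδ.iInter fun M =>
    ((harc i).1.isClosed_setOfPred_hasBoundedHolExt (harc i).2.2 M).isOpen_compl.isGδ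

lemma dense_setOfPred_not_oneSidedHolExtAt (hI : UniqueDiffOn ℝ I) (hγ : ContDiffOn ℝ k γ I)
    (ht₀ : t₀ ∈ interior I) (hinj : ∃ U ∈ 𝓝 t₀, InjOn γ U) :
    Dense {f : CkGamma k I γ | ¬ OneSidedHolExtAt I γ f.1 t₀} := by
  obtain ⟨ι, _, W, a, b, harc, hiff⟩ :=
    exists_countable_forall_oneSidedHolExtAt_iff hγ.continuousOn ht₀ hinj
  obtain ⟨φ, hφ, hosc⟩ := exists_contDiff_vanishing_on_subarcs k (γ t₀)
  intro f
  let g : CkGamma k I γ :=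
    ⟨fun z => φ z, Complex.ofRealCLM.contDiff.comp_contDiffOn (hφ.comp_contDiffOn hγ)⟩
  have hbad : {x : ℝ | OneSidedHolExtAt I γ (f.addSMul g x).1 t₀}.Countable := by
    simp_rw [hiff]
    rw [ofPred_exists]
    refine countable_iUnion fun i => ?_
    obtain ⟨hW, hi₀, -⟩ := harc i
    have hright : Icc t₀ (b i) ⊆ Icc (a i) (b i) := Icc_subset_Icc_left hi₀.1.le
    obtain ⟨⟨m, hm, hzero⟩, t, ht, hne⟩ := hosc γ t₀ (b i) hi₀.2 (hW.continuousOn.mono hright) rfl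
      fun e => hi₀.2.ne' (hW.injOn (right_mem_Icc.2 hW.lt.le) (Ioo_subset_Icc_self hi₀) e)
    have hsub : Ioo t₀ (b i) ⊆ Ioo (a i) (b i) := Ioo_subset_Ioo_left hi₀.1.le
    refine (hW.subsingleton_setOfPred_hasBoundedHolExt f.1 (g := g.1) ⟨m, hsub hm, ?_⟩
      ⟨t, hsub ht, Complex.ofReal_ne_zero.2 hne⟩).countable.mono fun x => ?_
    · exact hzero.mono fun s hs => Complex.ofReal_eq_zero.2 hs
    · rintro ⟨N, hN⟩
      exact ⟨(N : ℝ), hN⟩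
  have hgood : ∃ᶠ x in 𝓝 0, ¬ OneSidedHolExtAt I γ (f.addSMul g x).1 t₀ :=
    mem_closure_iff_frequently.1 (hbad.dense_compl ℝ 0)
  exact mem_closure_of_frequently_of_tendsto hgood (CkGamma.tendsto_addSMul hI f g)

lemma LocallyInjOn.exists_mem_nhds_injOn (h : LocallyInjOn γ I) {t : ℝ}
    (ht : t ∈ interior I) : ∃ U ∈ 𝓝 t, InjOn γ U := by
  obtain ⟨ε, hε, hinj⟩ := h t (interior_subset ht)
  exact ⟨_, inter_mem (mem_interior_iff_mem_nhds.1 ht)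
    (Ioo_mem_nhds (sub_lt_self t hε) (lt_add_of_pos_right t hε)), hinj⟩

theorem nonOneSidedHolExtAt_dense_Gdelta_general (hI : UniqueDiffOn ℝ I)
    (hγ : ContDiffOn ℝ k γ I) (ht₀ : t₀ ∈ interior I) (hinj : ∃ U ∈ 𝓝 t₀, InjOn γ U) :
    Dense {f : CkGamma k I γ | ¬ OneSidedHolExtAt I γ f.1 t₀} ∧
      IsGδ {f : CkGamma k I γ | ¬ OneSidedHolExtAt I γ f.1 t₀} :=
  ⟨dense_setOfPred_not_oneSidedHolExtAt hI hγ ht₀ hinj,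
    isGδ_setOfPred_not_oneSidedHolExtAt hγ.continuousOn ht₀ hinj⟩

end CkGamma

/-- Let `k ≤ l` in `{0,1,2,...} ∪ {∞}`, `I ⊆ ℝ` an interval, `γ : I → ℂ` locally
injective of class `C^l` on `I`, and `t0` an interior point of `I`. The class of
functions `f ∈ C^k(γ)` which are non one-sided holomorphically extendable at
`(t0, γ(t0))` is a dense and `Gδ` subset of `C^k(γ)`. -/
theorem nonOneSidedHolExtAt_dense_Gdelta
    (l k : ℕ∞) (hkl : k ≤ l) (I : Set ℝ) (hI : I.OrdConnected)
    (γ : ℝ → ℂ) (hloc : LocallyInjOn γ I) (hγ : ContDiffOn ℝ l γ I)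
    (t0 : ℝ) (ht0 : t0 ∈ interior I) :
    @Dense (CkGamma k I γ) (ckTop k I γ) {f | ¬ OneSidedHolExtAt I γ f.1 t0} ∧
    @IsGδ (CkGamma k I γ) (ckTop k I γ) {f | ¬ OneSidedHolExtAt I γ f.1 t0} :=
  nonOneSidedHolExtAt_dense_Gdelta_general (uniqueDiffOn_convex hI.convex ⟨t0, ht0⟩)
    (hγ.of_le (by exact_mod_cast hkl)) ht0 (hloc.exists_mem_nhds_injOn ht0)
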